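/- arXiv:2503.18436 — 6 statements merged into one kernel-verified Lean document; each statement's English description precedes it below -/
import Mathlib

section
/- Let (Ξ, d) be a nonempty separable complete metric space, let ℓ : Ξ → ℝ be Borel measurable and bounded above by a Lipschitz function, i.e. there exist L₀ ≥ 0, c₀ ∈ ℝ and ξ₀ ∈ Ξ with ℓ(ξ) ≤ c₀ + L₀·d(ξ, ξ₀) for all ξ ∈ Ξ. Fix data points ξ̂₁, …, ξ̂_N ∈ Ξ and a radius ρ > 0. Then the supremum of (1/N)·∑_{i=1}^N ∫_Ξ ℓ dP_i, taken over all N-tuples (P₁, …, P_N) of Borel probability measures on Ξ satisfying (1/N)·∑_{i=1}^N ∫_Ξ d(ξ, ξ̂_i) P_i(dξ) ≤ ρ, equals the infimum over λ ≥ 0 of ρλ + (1/N)·∑_{i=1}^N sup_{ξ ∈ Ξ} [ℓ(ξ) − λ·d(ξ, ξ̂_i)] (both sides taking values in ℝ ∪ {+∞}). -/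
open MeasureTheory
open scoped ENNReal

/-- Extended-real valued integral of a real function: positive part minus negative part,
well defined in `[-∞, +∞)` whenever the positive part is finite. -/
noncomputable def extInt {Ξ : Type*} [MeasurableSpace Ξ] (μ : Measure Ξ) (f : Ξ → ℝ) : EReal :=
  ((∫⁻ ξ, ENNReal.ofReal (f ξ) ∂μ : ℝ≥0∞) : EReal) -
    ((∫⁻ ξ, ENNReal.ofReal (-(f ξ)) ∂μ : ℝ≥0∞) : EReal)

theorem ereal_coe_sum {ι : Type*} (s : Finset ι) (f : ι → ℝ) :
    ((∑ i ∈ s, f i : ℝ) : EReal) = ∑ i ∈ s, (f i : EReal) :=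
  map_sum (⟨⟨Real.toEReal, EReal.coe_zero⟩, EReal.coe_add⟩ : ℝ →+ EReal) f s

/-- For an integrable function the extended integral is the Bochner integral. -/
theorem extInt_eq_integral {Ξ : Type*} [MeasurableSpace Ξ] {μ : Measure Ξ} {f : Ξ → ℝ}
    (hf : Integrable f μ) : extInt μ f = ((∫ ξ, f ξ ∂μ : ℝ) : EReal) := by
  have hpos : ∫⁻ ξ, ENNReal.ofReal (f ξ) ∂μ ≠ ⊤ := hf.lintegral_lt_top.ne
  have hneg : ∫⁻ ξ, ENNReal.ofReal (-(f ξ)) ∂μ ≠ ⊤ := hf.neg.lintegral_lt_top.ne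
  rw [extInt, integral_eq_lintegral_pos_part_sub_lintegral_neg_part hf, EReal.coe_sub,
    EReal.coe_ennreal_toReal hpos, EReal.coe_ennreal_toReal hneg]

/-- The extended integral is bounded by the integral of any integrable majorant. -/
theorem extInt_le_integral {Ξ : Type*} [MeasurableSpace Ξ] {μ : Measure Ξ} {f g : Ξ → ℝ}
    (hf : Measurable f) (hg : Integrable g μ) (hfg : ∀ ξ, f ξ ≤ g ξ) :
    extInt μ f ≤ ((∫ ξ, g ξ ∂μ : ℝ) : EReal) := by
  by_cases hneg : ∫⁻ ξ, ENNReal.ofReal (-(f ξ)) ∂μ = ⊤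
  · simp [extInt, hneg]
  have hpos : ∫⁻ ξ, ENNReal.ofReal (f ξ) ∂μ ≠ ⊤ :=
    ((lintegral_mono fun ξ => ENNReal.ofReal_le_ofReal (hfg ξ)).trans_lt hg.lintegral_lt_top).ne
  have hint : Integrable f μ := by
    refine ⟨hf.aestronglyMeasurable, ?_⟩
    rw [hasFiniteIntegral_iff_norm]
    have h : ∀ ξ, ENNReal.ofReal ‖f ξ‖ = ENNReal.ofReal (f ξ) + ENNReal.ofReal (-(f ξ)) := by
      intro ξ
      rcases le_total 0 (f ξ) with h0 | h0
      · rw [Real.norm_of_nonneg h0, ENNReal.ofReal_of_nonpos (neg_nonpos.2 h0), add_zero]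
      · rw [Real.norm_of_nonpos h0, ENNReal.ofReal_of_nonpos h0, zero_add]
    simp_rw [h]
    rw [lintegral_add_left hf.ennreal_ofReal]
    exact ENNReal.add_lt_top.2 ⟨hpos.lt_top, lt_top_iff_ne_top.2 hneg⟩
  rw [extInt_eq_integral hint]
  exact_mod_cast integral_mono hint hg hfg

/-- A Lagrange multiplier for a planar convex set under a Slater condition: if the second
coordinate is at most `M` wherever the first is at most `r`, a nonnegative slope extends this
bound to the whole set. -/
theorem exists_multiplier_of_convex {C : Set (ℝ × ℝ)} (hC : Convex ℝ C) {r M : ℝ}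
    {p₀ : ℝ × ℝ} (hp₀ : p₀ ∈ C) (hslater : p₀.1 < r) (hM : ∀ p ∈ C, p.1 ≤ r → p.2 ≤ M) :
    ∃ lam : ℝ, 0 ≤ lam ∧ ∀ p ∈ C, p.2 - lam * p.1 ≤ M - lam * r := by
  let S : Set ℝ := insert 0 ((fun p : ℝ × ℝ => (p.2 - M) / (p.1 - r)) '' {p ∈ C | r < p.1})
  let T : Set ℝ := (fun p : ℝ × ℝ => (M - p.2) / (r - p.1)) '' {p ∈ C | p.1 < r}
  have hST : ∀ x ∈ S, ∀ y ∈ T, x ≤ y := by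
    rintro x hx y ⟨q, ⟨hqC, hq⟩, rfl⟩
    rcases hx with rfl | ⟨p, ⟨hpC, hp⟩, rfl⟩
    · exact div_nonneg (sub_nonneg.2 (hM q hqC hq.le)) (sub_nonneg.2 hq.le)
    have hpq : 0 < p.1 - q.1 := by linarith
    have hmem := hC hpC hqC (div_nonneg (sub_nonneg.2 hq.le) hpq.le)
      (div_nonneg (sub_nonneg.2 hp.le) hpq.le) (by field_simp; ring)
    have hle := hM _ hmem (le_of_eq (by
      simp only [Prod.fst_add, Prod.smul_fst, smul_eq_mul]
      field_simp
      ring))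
    simp only [Prod.snd_add, Prod.smul_snd, smul_eq_mul] at hle
    have hle' : (r - q.1) * p.2 + (p.1 - r) * q.2 ≤ M * (p.1 - q.1) := by
      rw [← div_le_iff₀ hpq]
      exact le_of_eq_of_le (by ring) hle
    change (p.2 - M) / (p.1 - r) ≤ (M - q.2) / (r - q.1)
    rw [div_le_div_iff₀ (sub_pos.2 hp) (sub_pos.2 hq)]
    linarith
  have hSne : S.Nonempty := Set.insert_nonempty _ _
  have hTne : T.Nonempty := ⟨_, p₀, ⟨hp₀, hslater⟩, rfl⟩
  obtain ⟨lam, hS, hT⟩ := exists_between_of_forall_le hSne hTne hST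
  refine ⟨lam, hS (Set.mem_insert _ _), fun p hp => ?_⟩
  rcases lt_trichotomy p.1 r with h | h | h
  · have := hT ⟨p, ⟨hp, h⟩, rfl⟩
    have := (le_div_iff₀ (sub_pos.2 h)).1 this
    linarith
  · have := hM p hp h.le
    rw [h]
    linarith
  · have := hS (Set.mem_insert_of_mem _ ⟨p, ⟨hp, h⟩, rfl⟩)
    have := (div_le_iff₀ (sub_pos.2 h)).1 this
    linarith

/-- A bound on all sums of values of finitely many functions of independent arguments bounds the
sum of their suprema. -/
theorem sum_iSup_coe_le {ι α : Type*} [Nonempty α] (s : Finset ι)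
    (f : ι → α → ℝ) (K : ℝ) (h : ∀ x : ι → α, ∑ i ∈ s, f i (x i) ≤ K) :
    ∑ i ∈ s, ⨆ x, ((f i x : ℝ) : EReal) ≤ (K : EReal) := by
  classical
  induction s using Finset.induction_on generalizing K with
  | empty => simpa using h (fun _ => Classical.arbitrary α)
  | insert a s ha ih =>
    rw [Finset.sum_insert ha]
    have hS : ∀ y, ∑ i ∈ s, ⨆ x, ((f i x : ℝ) : EReal) ≤ ((K - f a y : ℝ) : EReal) := by
      intro y
      refine ih _ fun x => ?_
      have hx := h (Function.update x a y)
      rw [Finset.sum_insert ha, Function.update_self] at hx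
      have hsum : ∑ i ∈ s, f i (Function.update x a y i) = ∑ i ∈ s, f i (x i) :=
        Finset.sum_congr rfl fun i hi => by
          rw [Function.update_of_ne (ne_of_mem_of_not_mem hi ha)]
      linarith
    have y₀ := Classical.arbitrary α
    generalize ∑ i ∈ s, ⨆ x, ((f i x : ℝ) : EReal) = S at hS
    induction S with
    | bot => simp
    | top => exact absurd (top_le_iff.1 (hS y₀)) (EReal.coe_ne_top _)
    | coe S =>
      have hsup : ⨆ x, ((f a x : ℝ) : EReal) ≤ ((K - S : ℝ) : EReal) :=
        iSup_le fun y => by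
          have := EReal.coe_le_coe_iff.1 (hS y)
          exact EReal.coe_le_coe_iff.2 (by linarith)
      calc _ ≤ ((K - S : ℝ) : EReal) + (S : EReal) := by gcongr
        _ = (K : EReal) := by rw [← EReal.coe_add, sub_add_cancel]

/-- The pairs (total transport cost, total expected loss) attained by tuples of probability
measures with finite cost and integrable loss. -/
def costLossSet {Ξ ι : Type*} [Fintype ι] [MeasurableSpace Ξ] (c : ι → Ξ → ℝ) (ℓ : Ξ → ℝ) :
    Set (ℝ × ℝ) :=
  {p | ∃ P : ι → Measure Ξ, (∀ i, IsProbabilityMeasure (P i)) ∧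
    (∀ i, Integrable (c i) (P i)) ∧ (∀ i, Integrable ℓ (P i)) ∧
    p = (∑ i, ∫ ξ, c i ξ ∂P i, ∑ i, ∫ ξ, ℓ ξ ∂P i)}

theorem convex_costLossSet {Ξ ι : Type*} [Fintype ι] [MeasurableSpace Ξ] (c : ι → Ξ → ℝ)
    (ℓ : Ξ → ℝ) : Convex ℝ (costLossSet c ℓ) := by
  rintro _ ⟨P, hP, hPc, hPl, rfl⟩ _ ⟨Q, hQ, hQc, hQl, rfl⟩ a b ha hb hab
  have mix : ∀ (i : ι) (f : Ξ → ℝ), Integrable f (P i) → Integrable f (Q i) →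
      Integrable f (ENNReal.ofReal a • P i + ENNReal.ofReal b • Q i) ∧
      ∫ ξ, f ξ ∂(ENNReal.ofReal a • P i + ENNReal.ofReal b • Q i) =
        a * ∫ ξ, f ξ ∂P i + b * ∫ ξ, f ξ ∂Q i := by
    intro i f hfP hfQ
    have h1 := hfP.smul_measure (ENNReal.ofReal_ne_top (r := a))
    have h2 := hfQ.smul_measure (ENNReal.ofReal_ne_top (r := b))
    refine ⟨h1.add_measure h2, ?_⟩
    rw [integral_add_measure h1 h2, integral_smul_measure, integral_smul_measure,
      ENNReal.toReal_ofReal ha, ENNReal.toReal_ofReal hb, smul_eq_mul, smul_eq_mul]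
  refine ⟨fun i => ENNReal.ofReal a • P i + ENNReal.ofReal b • Q i, fun i => ⟨?_⟩,
    fun i => (mix i _ (hPc i) (hQc i)).1, fun i => (mix i _ (hPl i) (hQl i)).1, ?_⟩
  · simp [← ENNReal.ofReal_add ha hb, hab]
  · simp_rw [fun i => (mix i _ (hPc i) (hQc i)).2, fun i => (mix i _ (hPl i) (hQl i)).2,
      Finset.sum_add_distrib, ← Finset.mul_sum]
    rfl

theorem dirac_mem_costLossSet {Ξ ι : Type*} [Fintype ι] [MeasurableSpace Ξ]
    [MeasurableSingletonClass Ξ] (c : ι → Ξ → ℝ) (ℓ : Ξ → ℝ) (x : ι → Ξ) :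
    (∑ i, c i (x i), ∑ i, ℓ (x i)) ∈ costLossSet c ℓ :=
  ⟨fun i => Measure.dirac (x i), fun _ => inferInstance,
    fun _ => integrable_dirac (by simp), fun _ => integrable_dirac (by simp),
    by simp [integral_dirac]⟩

/-- Strong duality for the Wasserstein-constrained worst-case expected loss
(Proposition 1 of the paper). -/
theorem wasserstein_strong_duality
    {Ξ : Type*} [MetricSpace Ξ] [Nonempty Ξ]
    [TopologicalSpace.SeparableSpace Ξ] [CompleteSpace Ξ]
    [MeasurableSpace Ξ] [BorelSpace Ξ]
    (ℓ : Ξ → ℝ) (hℓ : Measurable ℓ)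
    (L₀ c₀ : ℝ) (hL₀ : 0 ≤ L₀) (ξ₀ : Ξ)
    (hbound : ∀ ξ, ℓ ξ ≤ c₀ + L₀ * dist ξ ξ₀)
    (N : ℕ) (hN : 0 < N) (ξhat : Fin N → Ξ)
    (ρ : ℝ) (hρ : 0 < ρ) :
    sSup { v : EReal | ∃ P : Fin N → Measure Ξ,
        (∀ i, IsProbabilityMeasure (P i)) ∧
        (∑ i, ∫⁻ ξ, ENNReal.ofReal (dist ξ (ξhat i)) ∂(P i)) / (N : ℝ≥0∞)
          ≤ ENNReal.ofReal ρ ∧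
        v = (((N : ℝ)⁻¹ : ℝ) : EReal) * ∑ i, extInt (P i) ℓ } =
    ⨅ (lam : ℝ) (_ : 0 ≤ lam),
      ((ρ * lam : ℝ) : EReal) + (((N : ℝ)⁻¹ : ℝ) : EReal) *
        ∑ i, ⨆ ξ : Ξ, ((ℓ ξ - lam * dist ξ (ξhat i) : ℝ) : EReal) := by
  have hN' : (0 : ℝ) < N := Nat.cast_pos.2 hN
  have hbudget : ∀ P : Fin N → Measure Ξ,
      (∑ i, ∫⁻ ξ, ENNReal.ofReal (dist ξ (ξhat i)) ∂(P i)) / (N : ℝ≥0∞) ≤ ENNReal.ofReal ρ ↔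
        ∑ i, ∫⁻ ξ, ENNReal.ofReal (dist ξ (ξhat i)) ∂(P i) ≤ ENNReal.ofReal (ρ * N) := by
    intro P
    rw [ENNReal.div_le_iff (by exact_mod_cast hN.ne') (ENNReal.natCast_ne_top N),
      ENNReal.ofReal_mul hρ.le, ENNReal.ofReal_natCast]
  have hinv : (0 : EReal) ≤ (((N : ℝ)⁻¹ : ℝ) : EReal) := by
    exact_mod_cast (inv_pos.2 hN').le
  have hdist : ∀ x : Ξ, Measurable fun ξ => dist ξ x := fun x =>
    (continuous_id.dist continuous_const).measurable
  apply le_antisymm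
  · refine sSup_le ?_
    rintro _ ⟨P, hP, hcost, rfl⟩
    refine le_iInf₂ fun lam hlam => ?_
    rw [hbudget] at hcost
    have hint : ∀ i, Integrable (fun ξ => dist ξ (ξhat i)) (P i) := by
      intro i
      refine ⟨(hdist _).aestronglyMeasurable, ?_⟩
      rw [hasFiniteIntegral_iff_ofReal (Filter.Eventually.of_forall fun _ => dist_nonneg)]
      exact ((Finset.single_le_sum (f := fun i => ∫⁻ ξ, ENNReal.ofReal (dist ξ (ξhat i)) ∂(P i))
        (fun _ _ => zero_le) (Finset.mem_univ i)).trans hcost).trans_lt ENNReal.ofReal_lt_top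
    have hcost' : ∑ i, ∫ ξ, dist ξ (ξhat i) ∂(P i) ≤ ρ * N := by
      rw [← ENNReal.ofReal_le_ofReal_iff (by positivity), ENNReal.ofReal_sum_of_nonneg
        fun i _ => integral_nonneg fun _ => dist_nonneg]
      refine le_of_eq_of_le (Finset.sum_congr rfl fun i _ => ?_) hcost
      exact ofReal_integral_eq_lintegral_ofReal (hint i)
        (Filter.Eventually.of_forall fun _ => dist_nonneg)
    have hterm : ∀ i, extInt (P i) ℓ ≤ ((lam * ∫ ξ, dist ξ (ξhat i) ∂(P i) : ℝ) : EReal) +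
        ⨆ ξ : Ξ, ((ℓ ξ - lam * dist ξ (ξhat i) : ℝ) : EReal) := by
      intro i
      have hle := le_iSup fun ξ : Ξ => ((ℓ ξ - lam * dist ξ (ξhat i) : ℝ) : EReal)
      generalize (⨆ ξ : Ξ, ((ℓ ξ - lam * dist ξ (ξhat i) : ℝ) : EReal)) = S at hle ⊢
      induction S with
      | bot => exact absurd (le_bot_iff.1 (hle ξ₀)) (EReal.coe_ne_bot _)
      | top => rw [EReal.coe_add_top]; exact le_top
      | coe S =>
        have := extInt_le_integral (μ := P i) hℓ
          (((hint i).const_mul lam).add (integrable_const S)) fun ξ => by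
            have := EReal.coe_le_coe_iff.1 (hle ξ)
            simp only [Pi.add_apply]
            linarith
        refine this.trans (le_of_eq ?_)
        simp only [Pi.add_apply]
        rw [integral_add ((hint i).const_mul lam) (integrable_const S), integral_const_mul,
          integral_const, probReal_univ, one_smul, EReal.coe_add]
    calc (((N : ℝ)⁻¹ : ℝ) : EReal) * ∑ i, extInt (P i) ℓ
        ≤ (((N : ℝ)⁻¹ : ℝ) : EReal) * (((ρ * N * lam : ℝ) : EReal) +
            ∑ i, ⨆ ξ : Ξ, ((ℓ ξ - lam * dist ξ (ξhat i) : ℝ) : EReal)) := by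
          refine mul_le_mul_of_nonneg_left ((Finset.sum_le_sum fun i _ => hterm i).trans ?_) hinv
          rw [Finset.sum_add_distrib]
          gcongr
          rw [← ereal_coe_sum, ← Finset.mul_sum, EReal.coe_le_coe_iff]
          nlinarith
      _ = _ := by
          rw [EReal.left_distrib_of_nonneg_of_ne_top hinv (EReal.coe_ne_top _), ← EReal.coe_mul]
          congr 2
          field_simp
  · set V := sSup { v : EReal | ∃ P : Fin N → Measure Ξ,
        (∀ i, IsProbabilityMeasure (P i)) ∧
        (∑ i, ∫⁻ ξ, ENNReal.ofReal (dist ξ (ξhat i)) ∂(P i)) / (N : ℝ≥0∞)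
          ≤ ENNReal.ofReal ρ ∧
        v = (((N : ℝ)⁻¹ : ℝ) : EReal) * ∑ i, extInt (P i) ℓ }
    let C := costLossSet (fun i ξ => dist ξ (ξhat i)) ℓ
    have hvalue : ∀ p ∈ C, p.1 ≤ ρ * N → (((N : ℝ)⁻¹ * p.2 : ℝ) : EReal) ≤ V := by
      rintro _ ⟨P, hP, hPd, hPl, rfl⟩ hle
      refine le_sSup ⟨P, hP, ?_, ?_⟩
      · rw [hbudget]
        refine le_of_eq_of_le ?_ (ENNReal.ofReal_le_ofReal hle)
        rw [ENNReal.ofReal_sum_of_nonneg fun i _ => integral_nonneg fun _ => dist_nonneg]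
        exact Finset.sum_congr rfl fun i _ => (ofReal_integral_eq_lintegral_ofReal (hPd i)
          (Filter.Eventually.of_forall fun _ => dist_nonneg)).symm
      · simp_rw [fun i => extInt_eq_integral (hPl i)]
        rw [← ereal_coe_sum, ← EReal.coe_mul]
    have hp₀ : (0, ∑ i, ℓ (ξhat i)) ∈ C := by
      simpa using dirac_mem_costLossSet (fun i ξ => dist ξ (ξhat i)) ℓ ξhat
    have hslater : (0 : ℝ) < ρ * N := by positivity
    clear_value V
    induction V with
    | bot => exact absurd (le_bot_iff.1 (hvalue _ hp₀ hslater.le)) (EReal.coe_ne_bot _)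
    | top => exact le_top
    | coe M =>
      obtain ⟨lam, hlam, hsupp⟩ := exists_multiplier_of_convex (r := ρ * N) (M := N * M)
        (convex_costLossSet (fun i ξ => dist ξ (ξhat i)) ℓ) hp₀ hslater fun p hp hle => by
          have := EReal.coe_le_coe_iff.1 (hvalue p hp hle)
          rwa [inv_mul_le_iff₀ hN'] at this
      refine (iInf₂_le lam hlam).trans ?_
      have hsum := sum_iSup_coe_le Finset.univ
        (fun (i : Fin N) ξ => ℓ ξ - lam * dist ξ (ξhat i)) (N * M - lam * (ρ * N)) fun x => by
          have := hsupp _ (dirac_mem_costLossSet (fun i ξ => dist ξ (ξhat i)) ℓ x)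
          simpa [Finset.sum_sub_distrib, Finset.mul_sum] using this
      calc _ ≤ ((ρ * lam : ℝ) : EReal) + (((N : ℝ)⁻¹ : ℝ) : EReal) *
            ((N * M - lam * (ρ * N) : ℝ) : EReal) := by
            gcongr
        _ = (M : EReal) := by
            rw [← EReal.coe_mul, ← EReal.coe_add]
            congr 1
            field_simp
            ring
end

section
/- Let S, m ∈ ℕ, let q̂ ∈ Δ_S, θ > 0, and p ≥ 1 with conjugate exponent p_* (1/p + 1/p_* = 1), and set Q = {q ∈ Δ_S : ‖q − q̂‖_p ≤ θ}. Let W ⊆ ℝ^m be nonempty, closed and convex; for each s = 1, …, S let N_s ∈ ℕ, ρ_s ≥ 0, and let Ω_s ⊆ ℝ₊ × ℝ^{N_s} × ℝ^m be a nonempty, closed, convex set such that for every w ∈ W the value v_s(w) = inf{ρ_s·λ + (1/N_s)·∑_{i=1}^{N_s} α_i : (λ, α, w) ∈ Ω_s} is finite and w ↦ v_s(w) is lower semicontinuous on W. Then inf_{w ∈ W} max_{q ∈ Q} ∑_{s=1}^S q_s·v_s(w) equals the infimum of q̂ᵀ(z + η) + θ·‖z + γ·e + η‖_{p_*} taken over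 all w ∈ W, γ ∈ ℝ, η ∈ ℝ₊^S, z ∈ ℝ^S, and (λ_s, α_s) ∈ ℝ × ℝ^{N_s} satisfying (λ_s, α_s, w) ∈ Ω_s and z_s = ρ_s·λ_s + (1/N_s)·∑_{i=1}^{N_s} α_{si} for every s = 1, …, S. -/
open scoped ENNReal

/-- The `ℓ_p` norm on `ℝ^S`. -/
noncomputable def lpNorm {S : ℕ} (p : ℝ≥0∞) [Fact (1 ≤ p)] (x : Fin S → ℝ) : ℝ :=
  ‖(WithLp.equiv p (Fin S → ℝ)).symm x‖

/-- **Hölder's inequality** for `ℓ_p` norms with conjugate exponents in `[1, ∞]`. -/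
theorem sum_mul_le_lpNorm_mul_lpNorm {S : ℕ} (p pd : ℝ≥0∞) [Fact (1 ≤ p)] [Fact (1 ≤ pd)]
    [hpq : p.HolderConjugate pd] (x y : Fin S → ℝ) :
    ∑ s, x s * y s ≤ lpNorm p x * lpNorm pd y := by
  have sup_case : ∀ x y : Fin S → ℝ, ∑ s, x s * y s ≤ lpNorm 1 x * lpNorm ∞ y := by
    intro x y
    have hy : ∀ s, |y s| ≤ lpNorm ∞ y := fun s =>
      PiLp.norm_apply_le (WithLp.toLp ∞ y) s
    have hx : lpNorm 1 x = ∑ s, |x s| := PiLp.norm_eq_of_L1 (WithLp.toLp 1 x)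
    rw [hx, Finset.sum_mul]
    refine Finset.sum_le_sum fun s _ => (le_abs_self _).trans ?_
    rw [abs_mul]
    exact mul_le_mul_of_nonneg_left (hy s) (abs_nonneg _)
  by_cases hp : p = ∞
  · subst hp
    obtain rfl : pd = 1 := (ENNReal.HolderConjugate.eq_top_iff_eq_one ∞ pd).1 rfl
    simpa only [mul_comm] using sup_case y x
  by_cases hpd : pd = ∞
  · subst hpd
    have := hpq.symm
    obtain rfl : p = 1 := (ENNReal.HolderConjugate.eq_top_iff_eq_one ∞ p).1 rfl
    exact sup_case x y
  have h := ENNReal.HolderConjugate.toReal_of_ne_top hp hpd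
  have hx : lpNorm p x = _ := PiLp.norm_eq_sum h.pos (WithLp.toLp p x)
  have hy : lpNorm pd y = _ := PiLp.norm_eq_sum h.symm.pos (WithLp.toLp pd y)
  rw [hx, hy]
  exact Real.inner_le_Lp_mul_Lq Finset.univ x y h

/-- The `ℓ_{pd}` norm of `a` is attained by a pairing with an element of the `ℓ_p` unit ball. -/
theorem exists_lpNorm_le_one_sum_mul_eq {S : ℕ} (p pd : ℝ≥0∞) [Fact (1 ≤ p)] [Fact (1 ≤ pd)]
    [hpq : p.HolderConjugate pd] (hS : 0 < S) (a : Fin S → ℝ) :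
    ∃ d : Fin S → ℝ, lpNorm p d ≤ 1 ∧ ∑ s, d s * a s = lpNorm pd a := by
  have : Nonempty (Fin S) := ⟨⟨0, hS⟩⟩
  by_cases hp : p = ∞
  · subst hp
    obtain rfl : pd = 1 := (ENNReal.HolderConjugate.eq_top_iff_eq_one ∞ pd).1 rfl
    refine ⟨fun s => SignType.sign (a s), ?_, ?_⟩
    · refine (PiLp.norm_eq_ciSup (WithLp.toLp ∞ fun s => (SignType.sign (a s) : ℝ))).trans_le
        (ciSup_le fun s => ?_)
      rcases lt_trichotomy (a s) 0 with h | h | h <;> simp [h]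
    · refine .trans ?_ (PiLp.norm_eq_of_L1 (WithLp.toLp 1 a)).symm
      exact Finset.sum_congr rfl fun s _ => sign_mul_self (a s)
  by_cases hpd : pd = ∞
  · subst hpd
    have := hpq.symm
    obtain rfl : p = 1 := (ENNReal.HolderConjugate.eq_top_iff_eq_one ∞ p).1 rfl
    obtain ⟨i, hi⟩ := exists_eq_ciSup_of_finite (f := fun s => ‖a s‖)
    refine ⟨Pi.single i (SignType.sign (a i)), ?_, ?_⟩
    · refine (PiLp.norm_eq_of_L1 (WithLp.toLp 1 _)).trans_le ?_
      rw [Finset.sum_eq_single i (fun s _ hs => by simp [hs]) (by simp)]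
      rcases lt_trichotomy (a i) 0 with h | h | h <;> simp [h]
    · refine .trans ?_ (PiLp.norm_eq_ciSup (WithLp.toLp ∞ a)).symm
      rw [Finset.sum_eq_single i (fun s _ hs => by simp [hs]) (by simp), Pi.single_eq_same,
        sign_mul_self]
      exact hi
  have h := ENNReal.HolderConjugate.toReal_of_ne_top hp hpd
  obtain ⟨g, hg, hga⟩ := (NNReal.isGreatest_Lp Finset.univ (fun s => ‖a s‖₊) h.symm).1
  have hsign : ∀ s, |(SignType.sign (a s) : ℝ) * g s| ≤ g s := by
    intro s
    rcases lt_trichotomy (a s) 0 with h | h | h <;> simp [h]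
  refine ⟨fun s => SignType.sign (a s) * g s, ?_, ?_⟩
  · have hd : lpNorm p (fun s => SignType.sign (a s) * (g s : ℝ)) = _ :=
      PiLp.norm_eq_sum h.pos (WithLp.toLp p _)
    rw [hd]
    refine Real.rpow_le_one (by positivity) ?_ h.one_div_pos.le
    refine (Finset.sum_le_sum fun s _ =>
      Real.rpow_le_rpow (abs_nonneg _) (hsign s) h.pos.le).trans ?_
    exact_mod_cast hg
  · have ha : lpNorm pd a = _ := PiLp.norm_eq_sum h.symm.pos (WithLp.toLp pd a)
    have hga' := congrArg ((↑) : NNReal → ℝ) hga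
    push_cast at hga'
    rw [ha]
    refine .trans (Finset.sum_congr rfl fun s _ => ?_) hga'
    rw [mul_right_comm, sign_mul_self, Real.norm_eq_abs]

/-- Strong duality for maximizing a linear functional over the intersection of the probability
simplex with an `ℓ_p` ball centred at a point of the simplex; the dual optimum is attained. -/
theorem exists_dual_le_of_forall_sum_mul_le {S : ℕ} (hS : 0 < S) (p pd : ℝ≥0∞) [Fact (1 ≤ p)]
    [Fact (1 ≤ pd)] [p.HolderConjugate pd] (qhat : Fin S → ℝ) (hqhat₀ : ∀ s, 0 ≤ qhat s)
    (hqhat₁ : ∑ s, qhat s = 1) {θ : ℝ} (hθ : 0 < θ) (u : Fin S → ℝ) (M : ℝ)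
    (hM : ∀ q : Fin S → ℝ, (∀ s, 0 ≤ q s) → ∑ s, q s = 1 → lpNorm p (q - qhat) ≤ θ →
      ∑ s, q s * u s ≤ M) :
    ∃ (γ : ℝ) (η : Fin S → ℝ), (∀ s, 0 ≤ η s) ∧
      ∑ s, qhat s * (u s + η s) + θ * lpNorm pd (fun s => u s + γ + η s) ≤ M := by
  let A : Set (PiLp p (fun _ : Fin S => ℝ) × ℝ) := Metric.ball 0 θ ×ˢ Set.Ioi M
  let B : Set (PiLp p (fun _ : Fin S => ℝ) × ℝ) :=
    {x | (∀ s, 0 ≤ x.1 s + qhat s) ∧ ∑ s, (x.1 s + qhat s) = 1 ∧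
      x.2 ≤ ∑ s, (x.1 s + qhat s) * u s}
  have hA : Convex ℝ A := (convex_ball _ _).prod (convex_Ioi _)
  have hAo : IsOpen A := Metric.isOpen_ball.prod isOpen_Ioi
  have hB : Convex ℝ B := by
    rintro x ⟨hx0, hx1, hx2⟩ y ⟨hy0, hy1, hy2⟩ α β hα hβ hαβ
    have key : ∀ s, (α • x + β • y).1 s + qhat s
        = α * (x.1 s + qhat s) + β * (y.1 s + qhat s) := by
      intro s
      simp only [Prod.fst_add, Prod.smul_fst, PiLp.add_apply, PiLp.smul_apply, smul_eq_mul]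
      linear_combination (-qhat s) * hαβ
    refine ⟨fun s => ?_, ?_, ?_⟩
    · rw [key]
      exact add_nonneg (mul_nonneg hα (hx0 s)) (mul_nonneg hβ (hy0 s))
    · simp only [key]
      rw [Finset.sum_add_distrib, ← Finset.mul_sum, ← Finset.mul_sum, hx1, hy1]
      linarith
    · simp only [key, add_mul, Finset.sum_add_distrib, mul_assoc, ← Finset.mul_sum]
      simp only [add_mul, Finset.sum_add_distrib] at hx2 hy2
      exact add_le_add (mul_le_mul_of_nonneg_left hx2 hα) (mul_le_mul_of_nonneg_left hy2 hβ)
  have hdisj : Disjoint A B := by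
    rw [Set.disjoint_left]
    rintro x ⟨hx1, hx2⟩ ⟨hb0, hb1, hb2⟩
    refine absurd (hM (fun s => x.1 s + qhat s) hb0 hb1 ?_) (not_le.2 (hx2.trans_le hb2))
    have : (fun s => x.1 s + qhat s) - qhat = fun s => x.1 s := by ext s; simp
    rw [this]
    exact (mem_ball_zero_iff.1 hx1).le
  obtain ⟨f, c, hfA, hfB⟩ := geometric_hahn_banach_open hA hAo hB hdisj
  obtain ⟨b, β, hf⟩ : ∃ (b : Fin S → ℝ) (β : ℝ), ∀ (d : Fin S → ℝ) (t : ℝ),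
      f (WithLp.toLp p d, t) = ∑ s, d s * b s + t * β := by
    refine ⟨fun s => f (WithLp.toLp p (Pi.single s 1), 0), f (0, 1), fun d t => ?_⟩
    have hdt : ((WithLp.toLp p d, t) : PiLp p (fun _ : Fin S => ℝ) × ℝ)
        = ∑ s, d s • (WithLp.toLp p (Pi.single s (1 : ℝ)), (0 : ℝ)) + t • (0, 1) := by
      refine Prod.ext ?_ ?_
      · ext i
        simp [Prod.fst_sum, Pi.single_apply]
      · simp [Prod.snd_sum]
    rw [hdt, map_add, map_sum]
    simp only [map_smul, smul_eq_mul]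
  have hA' : ∀ (d : Fin S → ℝ) (t : ℝ), lpNorm p d < θ → M < t →
      ∑ s, d s * b s + t * β < c := fun d t hd ht => by
    rw [← hf]
    exact hfA _ ⟨mem_ball_zero_iff.2 hd, ht⟩
  have hB' : ∀ q : Fin S → ℝ, (∀ s, 0 ≤ q s) → ∑ s, q s = 1 →
      c ≤ ∑ s, (q s - qhat s) * b s + (∑ s, q s * u s) * β := fun q h0 h1 => by
    have := hfB (WithLp.toLp p (q - qhat), ∑ s, q s * u s) ⟨by simpa using h0, by simpa using h1,
      by simp⟩
    rwa [hf] at this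
  have norm_zero_eq : lpNorm p (0 : Fin S → ℝ) = 0 := norm_zero (E := PiLp p fun _ : Fin S => ℝ)
  have hβ : β < 0 := by
    have h1 := hA' 0 (M + 1) (by rwa [norm_zero_eq]) (by linarith)
    have h2 := hB' qhat hqhat₀ hqhat₁
    have h3 := hM qhat hqhat₀ hqhat₁ (by rw [sub_self, norm_zero_eq]; exact hθ.le)
    simp only [Pi.zero_apply, zero_mul, Finset.sum_const_zero, sub_self, zero_add] at h1 h2
    nlinarith
  have hβ0 : -β ≠ 0 := by linarith
  have hβp : 0 < -β := by linarith
  -- rescale the separating functional so that its last component is `-1`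
  let a : Fin S → ℝ := fun s => b s / -β
  let k : ℝ := c / -β
  have hb : ∀ s, b s = a s * -β := fun s => (div_mul_cancel₀ _ hβ0).symm
  have hk : c = k * -β := (div_mul_cancel₀ _ hβ0).symm
  have hAn : ∀ (d : Fin S → ℝ) (t : ℝ), lpNorm p d < θ → M < t → ∑ s, d s * a s - t < k := by
    intro d t hd ht
    have := hA' d t hd ht
    simp only [hb, hk, ← mul_assoc, ← Finset.sum_mul] at this
    nlinarith
  have hBn : ∀ s, k ≤ a s - ∑ i, qhat i * a i - u s := by
    intro s
    have := hB' (Pi.single s 1) (fun i => by by_cases h : i = s <;> simp [h])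
      (by simp)
    simp only [sub_mul, Finset.sum_sub_distrib, hb, hk, ← mul_assoc, ← Finset.sum_mul] at this
    simp only [Pi.single_apply, ite_mul, one_mul, zero_mul, Finset.sum_ite_eq',
      Finset.mem_univ, if_true] at this
    nlinarith
  have hnorm : θ * lpNorm pd a ≤ k + M := by
    obtain ⟨d, hd, hda⟩ := exists_lpNorm_le_one_sum_mul_eq p pd hS a
    have hlim : Filter.Tendsto (fun ε : ℝ => (θ - ε) * lpNorm pd a - (M + ε))
        (nhdsWithin 0 (Set.Ioi 0)) (nhds ((θ - 0) * lpNorm pd a - (M + 0))) :=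
      Continuous.continuousWithinAt (by fun_prop)
    have := le_of_tendsto (b := k) hlim ?_
    · linarith
    filter_upwards [Ioo_mem_nhdsGT hθ] with ε hε
    have hdε : lpNorm p ((θ - ε) • d) < θ := by
      have : lpNorm p ((θ - ε) • d) = |θ - ε| * lpNorm p d :=
        norm_smul (θ - ε) (WithLp.toLp p d)
      rw [this, abs_of_pos (by linarith [hε.2])]
      nlinarith [hε.1, hε.2]
    have := hAn _ (M + ε) hdε (by linarith [hε.1])
    simp only [Pi.smul_apply, smul_eq_mul, mul_assoc, ← Finset.mul_sum, hda] at this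
    exact this.le
  refine ⟨k + ∑ i, qhat i * a i, fun s => a s - u s - (k + ∑ i, qhat i * a i), fun s => ?_, ?_⟩
  · linarith [hBn s]
  · have h1 : (fun s => u s + (k + ∑ i, qhat i * a i) + (a s - u s - (k + ∑ i, qhat i * a i)))
        = a := by ext s; ring
    have h2 : ∑ s, qhat s * (u s + (a s - u s - (k + ∑ i, qhat i * a i))) = -k := by
      have : ∀ s, qhat s * (u s + (a s - u s - (k + ∑ i, qhat i * a i)))
          = qhat s * a s - qhat s * (k + ∑ i, qhat i * a i) := fun s => by ring
      simp only [this, Finset.sum_sub_distrib, ← Finset.sum_mul, hqhat₁]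
      ring
    rw [h1, h2]
    linarith

/-- Weak duality for maximizing a linear functional over the intersection of the probability
simplex with an `ℓ_p` ball. -/
theorem sum_mul_le_dual {S : ℕ} (p pd : ℝ≥0∞) [Fact (1 ≤ p)] [Fact (1 ≤ pd)]
    [p.HolderConjugate pd] {q qhat v z η : Fin S → ℝ} {θ : ℝ} (γ : ℝ) (hq₀ : ∀ s, 0 ≤ q s)
    (hq₁ : ∑ s, q s = 1) (hqhat₁ : ∑ s, qhat s = 1) (hq : lpNorm p (q - qhat) ≤ θ)
    (hη : ∀ s, 0 ≤ η s) (hvz : ∀ s, v s ≤ z s) :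
    ∑ s, q s * v s ≤
      ∑ s, qhat s * (z s + η s) + θ * lpNorm pd (fun s => z s + γ + η s) := by
  calc ∑ s, q s * v s
      ≤ ∑ s, q s * (z s + η s) := Finset.sum_le_sum fun s _ =>
        mul_le_mul_of_nonneg_left (by linarith [hη s, hvz s]) (hq₀ s)
    _ = ∑ s, qhat s * (z s + η s) + ∑ s, (q - qhat) s * (z s + γ + η s) := by
        have : ∀ s, (q - qhat) s * (z s + γ + η s)
            = q s * (z s + η s) - qhat s * (z s + η s) + (q s - qhat s) * γ := fun s => by
          simp only [Pi.sub_apply]; ring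
        simp only [this, Finset.sum_add_distrib, Finset.sum_sub_distrib, ← Finset.sum_mul, hq₁,
          hqhat₁]
        ring
    _ ≤ _ := by
        gcongr
        exact (sum_mul_le_lpNorm_mul_lpNorm p pd _ _).trans
          (mul_le_mul_of_nonneg_right hq (norm_nonneg (WithLp.toLp pd _)))

/-- The tractable reformulation of the DRFL problem (Theorem 1 of the paper). -/
theorem drfl_tractable_reformulation
    (S m : ℕ) (hS : 0 < S)
    (p pd : ℝ≥0∞) [Fact (1 ≤ p)] [Fact (1 ≤ pd)] (hp : 1 ≤ p) (hpq : 1 / p + 1 / pd = 1)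
    (qhat : Fin S → ℝ) (hqhat₀ : ∀ s, 0 ≤ qhat s) (hqhat₁ : ∑ s, qhat s = 1)
    (θ : ℝ) (hθ : 0 < θ)
    (W : Set (Fin m → ℝ)) (hWne : W.Nonempty) (hWcl : IsClosed W) (hWcv : Convex ℝ W)
    (Nn : Fin S → ℕ) (hNn : ∀ s, 0 < Nn s)
    (ρ : Fin S → ℝ) (hρ : ∀ s, 0 ≤ ρ s)
    (Ω : ∀ s : Fin S, Set (ℝ × (Fin (Nn s) → ℝ) × (Fin m → ℝ)))
    (hΩne : ∀ s, (Ω s).Nonempty) (hΩcl : ∀ s, IsClosed (Ω s)) (hΩcv : ∀ s, Convex ℝ (Ω s))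
    (hΩpos : ∀ s, ∀ x ∈ Ω s, 0 ≤ x.1)
    (v : Fin S → (Fin m → ℝ) → ℝ)
    (hv : ∀ s, ∀ w ∈ W, IsGLB
      {c : ℝ | ∃ lam alp, (lam, alp, w) ∈ Ω s ∧
        c = ρ s * lam + ((Nn s : ℝ))⁻¹ * ∑ i, alp i} (v s w))
    (hvlsc : ∀ s, LowerSemicontinuousOn (v s) W) :
    (⨅ w ∈ W, ⨆ qq ∈ {q : Fin S → ℝ |
        (∀ s, 0 ≤ q s) ∧ ∑ s, q s = 1 ∧ lpNorm p (q - qhat) ≤ θ},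
      ((∑ s, qq s * v s w : ℝ) : EReal)) =
    sInf { val : EReal | ∃ (w : Fin m → ℝ) (γ : ℝ) (η z lam : Fin S → ℝ)
        (alp : ∀ s, Fin (Nn s) → ℝ),
        w ∈ W ∧ (∀ s, 0 ≤ η s) ∧
        (∀ s, (lam s, alp s, w) ∈ Ω s) ∧
        (∀ s, z s = ρ s * lam s + ((Nn s : ℝ))⁻¹ * ∑ i, alp s i) ∧
        val = ((∑ s, qhat s * (z s + η s) +
          θ * lpNorm pd (fun s => z s + γ + η s) : ℝ) : EReal) } := by
  have hconj : p.HolderConjugate pd := ⟨by simpa using hpq⟩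
  refine le_antisymm (le_sInf ?_) (le_iInf₂ fun w hw => ?_)
  · rintro _ ⟨w, γ, η, z, lam, alp, hw, hη, hΩ, hz, rfl⟩
    refine (iInf₂_le w hw).trans (iSup₂_le fun q hq => EReal.coe_le_coe_iff.2 ?_)
    exact sum_mul_le_dual p pd γ hq.1 hq.2.1 hqhat₁ hq.2.2 hη
      fun s => (hv s w hw).1 ⟨lam s, alp s, hΩ s, hz s⟩
  · refine EReal.le_of_forall_lt_iff_le.1 fun M hM => ?_
    obtain ⟨M', hM', hM'M⟩ := EReal.lt_iff_exists_real_btwn.1 hM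
    have hε : 0 < M - M' := sub_pos.2 (EReal.coe_lt_coe_iff.1 hM'M)
    have hex : ∀ s, ∃ lam alp, (lam, alp, w) ∈ Ω s ∧
        ρ s * lam + ((Nn s : ℝ))⁻¹ * ∑ i, alp i < v s w + (M - M') := by
      intro s
      obtain ⟨_, ⟨lam, alp, h, rfl⟩, -, hlt⟩ :=
        (hv s w hw).exists_between (lt_add_of_pos_right _ hε)
      exact ⟨lam, alp, h, hlt⟩
    choose lam alp hΩ hlt using hex
    let z : Fin S → ℝ := fun s => ρ s * lam s + ((Nn s : ℝ))⁻¹ * ∑ i, alp s i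
    obtain ⟨γ, η, hη, hle⟩ := exists_dual_le_of_forall_sum_mul_le hS p pd qhat hqhat₀ hqhat₁ hθ z M
      fun q hq₀ hq₁ hq => by
        have hqM : ∑ s, q s * v s w ≤ M' := EReal.coe_le_coe_iff.1 <|
          (le_iSup₂ (f := fun (q : Fin S → ℝ) _ => ((∑ s, q s * v s w : ℝ) : EReal)) q
            ⟨hq₀, hq₁, hq⟩).trans hM'.le
        calc ∑ s, q s * z s
            ≤ ∑ s, q s * (v s w + (M - M')) := Finset.sum_le_sum fun s _ =>
              mul_le_mul_of_nonneg_left (hlt s).le (hq₀ s)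
          _ = ∑ s, q s * v s w + (M - M') := by
              simp only [mul_add, Finset.sum_add_distrib, ← Finset.sum_mul, hq₁, one_mul]
          _ ≤ M := by linarith
    refine le_trans (sInf_le ?_) (EReal.coe_le_coe_iff.2 hle)
    exact ⟨w, γ, η, z, lam, alp, hw, hη, hΩ, fun _ => rfl, rfl⟩
end

section
/- Let ‖·‖ be a norm on ℝ^n, κ > 0, ε ≥ 0, and let N(x, y) = ‖x‖ + κ|y| denote the associated norm on ℝ^n × ℝ with dual norm N_*. Let Ξ = {(x, y) ∈ ℝ^n × ℝ : C₁x + c₂y ≤ d} with C₁ ∈ ℝ^{r×n}, c₂, d ∈ ℝ^r, and assume there is a Slater point (x_S, y_S) with C₁x_S + c₂y_S < d. Fix data (x̂_i, ŷ_i) ∈ Ξ for i = 1, …, N. Then for (λ, α, w) ∈ ℝ₊ × ℝ^N × ℝ^n the following are equivalent: (a) for every i, sup_{(x,y) ∈ Ξ} [max{0, |⟨w, x⟩ − y| − ε} − λ·(‖x − x̂_i‖ + κ|y − ŷ_i|)] ≤ α_i; (b) α ∈ ℝ₊^N and for every i there exist φ_i⁺, φ_i⁻ ∈ ℝ₊^r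 with: ŷ_i − ⟨w, x̂_i⟩ − ε + ⟨φ_i⁺, d − C₁x̂_i − c₂ŷ_i⟩ ≤ α_i; ⟨w, x̂_i⟩ − ŷ_i − ε + ⟨φ_i⁻, d − C₁x̂_i − c₂ŷ_i⟩ ≤ α_i; N_*(C₁ᵀφ_i⁺ + w, c₂ᵀφ_i⁺ − 1) ≤ λ; and N_*(C₁ᵀφ_i⁻ − w, c₂ᵀφ_i⁻ + 1) ≤ λ. -/
/-- Lagrangian duality for a concave objective under finitely many affine constraints
satisfying Slater's condition. -/
theorem exists_lagrange_multiplier_of_slater {E : Type*} [AddCommGroup E] [Module ℝ E]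
    {r : ℕ} {f : E → ℝ} (hf : ConcaveOn ℝ Set.univ f) (C : Fin r → E →ₗ[ℝ] ℝ) (d : Fin r → ℝ)
    {zS : E} (hS : ∀ k, C k zS < d k) {β : ℝ} (h : ∀ z, (∀ k, C k z ≤ d k) → f z ≤ β) :
    ∃ φ : Fin r → ℝ, (∀ k, 0 ≤ φ k) ∧ ∀ z, f z + ∑ k, φ k * (d k - C k z) ≤ β := by
  let A : Set (ℝ × (Fin r → ℝ)) :=
    ⋃ z : E, Set.Iio (f z - β) ×ˢ Set.pi Set.univ fun k => Set.Iio (d k - C k z)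
  have mem_A : ∀ s u, (s, u) ∈ A ↔ ∃ z, s < f z - β ∧ ∀ k, u k < d k - C k z := by
    intro s u
    simp [A]
  have A_open : IsOpen A :=
    isOpen_iUnion fun z => isOpen_Iio.prod (isOpen_set_pi Set.finite_univ fun k _ => isOpen_Iio)
  have A_convex : Convex ℝ A := by
    rintro ⟨s, u⟩ hx ⟨s', u'⟩ hy a b ha hb hab
    obtain ⟨z, hs, hu⟩ := (mem_A _ _).1 hx
    obtain ⟨z', hs', hu'⟩ := (mem_A _ _).1 hy
    have combine : ∀ {p p' q q' : ℝ}, p < q → p' < q' → a * p + b * p' < a * q + b * q' := by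
      intro p p' q q' hp hp'
      rcases ha.eq_or_lt with rfl | ha
      · obtain rfl : b = 1 := by linarith
        linarith
      · have := mul_lt_mul_of_pos_left hp ha
        have := mul_le_mul_of_nonneg_left hp'.le hb
        linarith
    refine (mem_A _ _).2 ⟨a • z + b • z', ?_, fun k => ?_⟩
    · have := hf.2 (Set.mem_univ z) (Set.mem_univ z') ha hb hab
      have := combine hs hs'
      have e : a * (f z - β) + b * (f z' - β) = a * f z + b * f z' - β := by
        linear_combination -β * hab
      simp only [Prod.smul_mk, smul_eq_mul] at *
      linarith
    · have := combine (hu k) (hu' k)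
      have e : a * (d k - C k z) + b * (d k - C k z') = d k - (a * C k z + b * C k z') := by
        linear_combination d k * hab
      simp only [map_add, map_smul, smul_eq_mul, Prod.smul_mk, Pi.add_apply, Pi.smul_apply]
      linarith
  have zero_notMem : (0 : ℝ × (Fin r → ℝ)) ∉ A := by
    intro h0
    obtain ⟨z, hs, hu⟩ := (mem_A 0 0).1 h0
    have := h z fun k => by
      have := hu k
      simp only [Pi.zero_apply] at this
      linarith
    linarith
  obtain ⟨l, hl⟩ := geometric_hahn_banach_open_point A_convex A_open zero_notMem
  set p := l (1, 0) with hp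
  let q : Fin r → ℝ := fun k => l (0, Pi.single k 1)
  have l_apply : ∀ s u, l (s, u) = p * s + ∑ k, q k * u k := by
    intro s u
    have e : ((s, u) : ℝ × (Fin r → ℝ)) =
        s • ((1, 0) : ℝ × (Fin r → ℝ)) + ∑ k, u k • ((0, Pi.single k 1) : ℝ × (Fin r → ℝ)) := by
      refine Prod.ext ?_ ?_
      · simp [Prod.fst_sum]
      · funext j
        simp [Prod.snd_sum, Finset.sum_apply, Pi.single_apply]
    rw [e, map_add, map_smul, map_sum]
    simp only [map_smul, smul_eq_mul, q, hp]
    simp only [mul_comm]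
  have neg_A : ∀ (s : ℝ) (u : Fin r → ℝ), (∃ z, s < f z - β ∧ ∀ k, u k < d k - C k z) →
      p * s + ∑ k, q k * u k < 0 := by
    intro s u hz
    have := hl _ ((mem_A s u).2 hz)
    rwa [map_zero, l_apply] at this
  -- a bound that holds uniformly in a descending direction forces a nonnegative coefficient
  have nonneg_of_ray : ∀ {c m : ℝ}, (∀ t, 0 ≤ t → c - t * m < 0) → 0 ≤ m := by
    intro c m hcm
    by_contra! hm
    have h1 := hcm (|c| / -m) (div_nonneg (abs_nonneg _) (by linarith))
    have e : |c| / -m * m = -|c| := by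
      have := hm.ne
      field_simp
    have := neg_abs_le c
    linarith
  have hp_nonneg : 0 ≤ p := by
    refine nonneg_of_ray (c := p * (f zS - β - 1)) fun t ht => ?_
    have := neg_A (f zS - β - 1 - t) 0 ⟨zS, by linarith, fun k => by simpa using hS k⟩
    simp only [Pi.zero_apply, mul_zero, Finset.sum_const_zero] at this
    linarith
  have hq_nonneg : ∀ k, 0 ≤ q k := by
    intro k
    refine nonneg_of_ray (c := p * (f zS - β - 1)) fun t ht => ?_
    have := neg_A (f zS - β - 1) (Pi.single k (-t)) ⟨zS, by linarith, fun j => by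
      have := hS j
      by_cases hj : j = k
      · subst hj
        simp only [Pi.single_eq_same]
        linarith
      · simp only [Pi.single_eq_of_ne hj]
        linarith⟩
    simp only [Pi.single_apply, mul_ite, mul_zero, Finset.sum_ite_eq', Finset.mem_univ,
      if_true] at this
    linarith
  have hp_pos : 0 < p := by
    refine hp_nonneg.lt_of_ne fun h0 => ?_
    have := neg_A (f zS - β - 1) 0 ⟨zS, by linarith, fun k => by simpa using hS k⟩
    simp [← h0] at this
  refine ⟨fun k => q k / p, fun k => div_nonneg (hq_nonneg k) hp_nonneg, fun z => ?_⟩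
  have key : p * (f z - β) + ∑ k, q k * (d k - C k z) ≤ 0 := by
    refine le_of_forall_pos_le_add fun δ hδ => ?_
    have hM : 0 < p + ∑ k, q k := add_pos_of_pos_of_nonneg hp_pos
      (Finset.sum_nonneg fun k _ => hq_nonneg k)
    have hη : 0 < δ / (p + ∑ k, q k) := div_pos hδ hM
    have := neg_A (f z - β - δ / (p + ∑ k, q k))
      (fun k => d k - C k z - δ / (p + ∑ k, q k)) ⟨z, by linarith, fun k => by linarith⟩
    have e : δ / (p + ∑ k, q k) * (p + ∑ k, q k) = δ := div_mul_cancel₀ _ hM.ne'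
    simp only [mul_sub _ _ (δ / _), Finset.sum_sub_distrib, ← Finset.sum_mul] at this
    linarith
  have e : p * ∑ k, q k / p * (d k - C k z) = ∑ k, q k * (d k - C k z) := by
    rw [Finset.mul_sum]
    refine Finset.sum_congr rfl fun k _ => ?_
    field_simp
  refine le_of_mul_le_mul_left ?_ hp_pos
  rw [mul_add, e]
  linarith

/-- A linear objective penalised by `lam` times the distance to a point `z₀` is bounded by `β` on
a polyhedron with a Slater point iff some multiplier certifies it through the dual norm. -/
theorem linear_sub_seminorm_le_on_polyhedron_iff {E : Type*} [AddCommGroup E] [Module ℝ E]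
    {r : ℕ} (N : Seminorm ℝ E) (v : E →ₗ[ℝ] ℝ) (C : Fin r → E →ₗ[ℝ] ℝ) (d : Fin r → ℝ)
    {zS : E} (hS : ∀ k, C k zS < d k) (z₀ : E) {lam : ℝ} (hlam : 0 ≤ lam) (β : ℝ) :
    (∀ z, (∀ k, C k z ≤ d k) → v z - lam * N (z - z₀) ≤ β) ↔
      ∃ φ : Fin r → ℝ, (∀ k, 0 ≤ φ k) ∧ v z₀ + ∑ k, φ k * (d k - C k z₀) ≤ β ∧
        ∀ u, ∑ k, φ k * C k u - v u ≤ lam * N u := by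
  constructor
  · intro h
    have hf : ConcaveOn ℝ Set.univ fun z => v z - lam * N (z - z₀) := by
      refine ⟨convex_univ, fun x _ y _ a b ha hb hab => ?_⟩
      have e : a • x + b • y - z₀ = a • (x - z₀) + b • (y - z₀) := by
        have : z₀ = a • z₀ + b • z₀ := by rw [← add_smul, hab, one_smul]
        rw [smul_sub, smul_sub]
        nth_rewrite 1 [this]
        abel
      have h1 : N (a • x + b • y - z₀) ≤ a * N (x - z₀) + b * N (y - z₀) := by
        rw [e]
        refine (map_add_le_add N _ _).trans_eq ?_
        rw [map_smul_eq_mul, map_smul_eq_mul, Real.norm_of_nonneg ha, Real.norm_of_nonneg hb]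
      have := mul_le_mul_of_nonneg_left h1 hlam
      simp only [map_add, map_smul, smul_eq_mul]
      linarith
    obtain ⟨φ, hφ, H⟩ := exists_lagrange_multiplier_of_slater hf C d hS h
    refine ⟨φ, hφ, by simpa using H z₀, fun u => ?_⟩
    by_contra! hu
    set m := ∑ k, φ k * C k u - v u - lam * N u with hm
    have hm_pos : 0 < m := by linarith
    set c := β - (v z₀ + ∑ k, φ k * (d k - C k z₀)) with hc
    have ht : 0 ≤ (|c| + 1) / m := by positivity
    have H1 := H (z₀ - ((|c| + 1) / m) • u)
    have e1 : N (z₀ - ((|c| + 1) / m) • u - z₀) = (|c| + 1) / m * N u := by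
      rw [sub_sub_cancel_left, map_neg_eq_map, map_smul_eq_mul, Real.norm_of_nonneg ht]
    have e2 : ∑ k, φ k * (d k - C k (z₀ - ((|c| + 1) / m) • u)) =
        ∑ k, φ k * (d k - C k z₀) + (|c| + 1) / m * ∑ k, φ k * C k u := by
      rw [Finset.mul_sum, ← Finset.sum_add_distrib]
      refine Finset.sum_congr rfl fun k _ => ?_
      simp only [map_sub, map_smul, smul_eq_mul]
      ring
    rw [e1, e2, map_sub, map_smul, smul_eq_mul] at H1
    have e3 : (|c| + 1) / m * m = |c| + 1 := div_mul_cancel₀ _ hm_pos.ne'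
    have e4 : (|c| + 1) / m * m = (|c| + 1) / m * (∑ k, φ k * C k u) - (|c| + 1) / m * v u
      - lam * ((|c| + 1) / m * N u) := by
      rw [hm]
      ring
    have := le_abs_self c
    linarith
  · rintro ⟨φ, hφ, h1, h2⟩ z hz
    have h3 := h2 (z₀ - z)
    have e1 : N (z₀ - z) = N (z - z₀) := map_sub_rev N _ _
    have e2 : ∑ k, φ k * (d k - C k z₀) + ∑ k, φ k * C k (z₀ - z) =
        ∑ k, φ k * (d k - C k z) := by
      rw [← Finset.sum_add_distrib]
      refine Finset.sum_congr rfl fun k _ => ?_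
      rw [map_sub]
      ring
    have h4 : 0 ≤ ∑ k, φ k * (d k - C k z) :=
      Finset.sum_nonneg fun k _ => mul_nonneg (hφ k) (sub_nonneg.2 (hz k))
    rw [e1, map_sub] at h3
    linarith

/-- The linear functional on `ℝ^n × ℝ` represented by a vector. -/
def pairing {n : ℕ} (v : (Fin n → ℝ) × ℝ) : (Fin n → ℝ) × ℝ →ₗ[ℝ] ℝ where
  toFun u := (∑ j, v.1 j * u.1 j) + v.2 * u.2
  map_add' u u' := by
    simp only [Prod.fst_add, Prod.snd_add, Pi.add_apply, mul_add, Finset.sum_add_distrib]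
    ring
  map_smul' c u := by
    simp only [Prod.smul_fst, Prod.smul_snd, Pi.smul_apply, smul_eq_mul, RingHom.id_apply,
      mul_add, Finset.mul_sum, mul_left_comm]

theorem pairing_apply {n : ℕ} (v u : (Fin n → ℝ) × ℝ) :
    pairing v u = (∑ j, v.1 j * u.1 j) + v.2 * u.2 := rfl

/-- A supremum of a linear functional over the unit ball of a norm is at most `lam` iff the
functional is dominated by `lam` times the norm. -/
theorem isLUB_unitBall_le_iff {E : Type*} [AddCommGroup E] [Module ℝ E] (N : Seminorm ℝ E)
    (hN : ∀ u, N u = 0 → u = 0) (v : E →ₗ[ℝ] ℝ) {s : ℝ}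
    (hs : IsLUB {ρ | ∃ u, N u ≤ 1 ∧ ρ = v u} s) {lam : ℝ} (hlam : 0 ≤ lam) :
    s ≤ lam ↔ ∀ u, v u ≤ lam * N u := by
  rw [isLUB_le_iff hs]
  constructor
  · intro h u
    rcases (apply_nonneg N u).eq_or_lt with h0 | h0
    · simp [hN u h0.symm]
    · have := h ⟨(N u)⁻¹ • u, by
        rw [map_smul_eq_mul, Real.norm_of_nonneg (inv_nonneg.2 h0.le), inv_mul_cancel₀ h0.ne'],
        rfl⟩
      rw [map_smul, smul_eq_mul, inv_mul_le_iff₀ h0] at this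
      linarith
  · rintro h _ ⟨u, hu, rfl⟩
    exact (h u).trans (mul_le_of_le_one_right hlam hu)

/-- Corollary (SVR) of the paper: characterization of `(λ, α, w) ∈ Ω_s` for distributionally
robust support vector regression with the `ε`-insensitive loss, polyhedral support set
`Ξ = {(x, y) : C₁x + c₂y ≤ d}` admitting a Slater point, and regression transport cost
`d_R((x,y),(x',y')) = ‖x − x'‖ + κ|y − y'|`. Here `nn` is a norm on `ℝ^n` and `dN` is the
dual norm of the norm `N(x, y) = nn x + κ|y|` on `ℝ^n × ℝ`. -/
theorem drfl_svr_omega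
    (n N r : ℕ) (κ ε : ℝ) (hκ : 0 < κ) (hε : 0 ≤ ε)
    (nn : (Fin n → ℝ) → ℝ)
    (hnn_nonneg : ∀ x, 0 ≤ nn x)
    (hnn_def : ∀ x, nn x = 0 ↔ x = 0)
    (hnn_add : ∀ x y, nn (x + y) ≤ nn x + nn y)
    (hnn_smul : ∀ (c : ℝ) x, nn (c • x) = |c| * nn x)
    (dN : ((Fin n → ℝ) × ℝ) → ℝ)
    (hdN : ∀ v : (Fin n → ℝ) × ℝ, IsLUB
      {ρ : ℝ | ∃ u : (Fin n → ℝ) × ℝ, nn u.1 + κ * |u.2| ≤ 1 ∧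
        ρ = (∑ j, v.1 j * u.1 j) + v.2 * u.2} (dN v))
    (C₁ : Fin r → Fin n → ℝ) (c₂ d : Fin r → ℝ)
    (xS : Fin n → ℝ) (yS : ℝ)
    (hSlater : ∀ k, (∑ j, C₁ k j * xS j) + c₂ k * yS < d k)
    (xhat : Fin N → Fin n → ℝ) (yhat : Fin N → ℝ)
    (hdata : ∀ i k, (∑ j, C₁ k j * xhat i j) + c₂ k * yhat i ≤ d k)
    (lam : ℝ) (hlam : 0 ≤ lam) (α : Fin N → ℝ) (w : Fin n → ℝ) :
    (∀ i, ∀ (x : Fin n → ℝ) (y : ℝ),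
        (∀ k, (∑ j, C₁ k j * x j) + c₂ k * y ≤ d k) →
        max 0 (|(∑ j, w j * x j) - y| - ε)
          - lam * (nn (x - xhat i) + κ * |y - yhat i|) ≤ α i)
    ↔
    ((∀ i, 0 ≤ α i) ∧ ∀ i, ∃ φp φm : Fin r → ℝ,
      (∀ k, 0 ≤ φp k) ∧ (∀ k, 0 ≤ φm k) ∧
      yhat i - (∑ j, w j * xhat i j) - ε +
        (∑ k, φp k * (d k - (∑ j, C₁ k j * xhat i j) - c₂ k * yhat i)) ≤ α i ∧
      (∑ j, w j * xhat i j) - yhat i - ε +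
        (∑ k, φm k * (d k - (∑ j, C₁ k j * xhat i j) - c₂ k * yhat i)) ≤ α i ∧
      dN (fun j => (∑ k, C₁ k j * φp k) + w j, (∑ k, c₂ k * φp k) - 1) ≤ lam ∧
      dN (fun j => (∑ k, C₁ k j * φm k) - w j, (∑ k, c₂ k * φm k) + 1) ≤ lam) := by
  let M : Seminorm ℝ ((Fin n → ℝ) × ℝ) := Seminorm.of (fun u => nn u.1 + κ * |u.2|)
    (fun u u' => by
      have h1 := hnn_add u.1 u'.1
      have h2 := mul_le_mul_of_nonneg_left (abs_add_le u.2 u'.2) hκ.le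
      simp only [Prod.fst_add, Prod.snd_add]
      linarith)
    (fun c u => by
      simp only [Prod.smul_fst, Prod.smul_snd, hnn_smul, smul_eq_mul, abs_mul, Real.norm_eq_abs]
      ring)
  have M_apply : ∀ u, M u = nn u.1 + κ * |u.2| := fun u => rfl
  have M_def : ∀ u, M u = 0 → u = 0 := by
    intro u hu
    rw [M_apply] at hu
    have h1 := hnn_nonneg u.1
    have h2 : 0 ≤ κ * |u.2| := by positivity
    have h3 : κ * |u.2| = 0 := by linarith
    refine Prod.ext ((hnn_def _).1 (by linarith)) ?_
    simpa [hκ.ne'] using h3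
  have dN_le : ∀ v, dN v ≤ lam ↔ ∀ u, pairing v u ≤ lam * M u := fun v =>
    isLUB_unitBall_le_iff M M_def (pairing v) (hdN v) hlam
  have dual : ∀ (i : Fin N) (a : Fin n → ℝ) (b β : ℝ),
      (∀ x y, (∀ k, (∑ j, C₁ k j * x j) + c₂ k * y ≤ d k) →
        (∑ j, a j * x j) + b * y - lam * (nn (x - xhat i) + κ * |y - yhat i|) ≤ β) ↔
      ∃ φ : Fin r → ℝ, (∀ k, 0 ≤ φ k) ∧ (∑ j, a j * xhat i j) + b * yhat i +
        (∑ k, φ k * (d k - (∑ j, C₁ k j * xhat i j) - c₂ k * yhat i)) ≤ β ∧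
        dN (fun j => (∑ k, C₁ k j * φ k) - a j, (∑ k, c₂ k * φ k) - b) ≤ lam := by
    intro i a b β
    have key := linear_sub_seminorm_le_on_polyhedron_iff M (pairing (a, b))
      (fun k => pairing (C₁ k, c₂ k)) d (zS := (xS, yS)) hSlater (xhat i, yhat i) hlam β
    rw [Prod.forall] at key
    refine key.trans (exists_congr fun φ => and_congr_right fun _ => and_congr ?_ ?_)
    · simp only [pairing_apply, sub_sub]
    · rw [dN_le]
      refine forall_congr' fun u => ?_
      have e : ∑ k, φ k * pairing (C₁ k, c₂ k) u - pairing (a, b) u =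
          pairing (fun j => (∑ k, C₁ k j * φ k) - a j, (∑ k, c₂ k * φ k) - b) u := by
        simp only [pairing_apply, sub_mul, mul_add, Finset.sum_add_distrib,
          Finset.sum_sub_distrib, Finset.sum_mul, Finset.mul_sum]
        rw [Finset.sum_comm]
        simp only [mul_comm (φ _), mul_right_comm _ (φ _)]
        ring
      rw [e]
  have plus := fun i => dual i (fun j => -w j) 1 (α i + ε)
  have minus := fun i => dual i w (-1) (α i + ε)
  simp only [sub_neg_eq_add, neg_mul, Finset.sum_neg_distrib, one_mul] at plus minus
  constructor
  · intro h
    have α_nonneg : ∀ i, 0 ≤ α i := by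
      intro i
      have h1 := h i (xhat i) (yhat i) (hdata i)
      rw [sub_self, sub_self, (hnn_def 0).2 rfl, abs_zero, mul_zero, add_zero, mul_zero,
        sub_zero] at h1
      exact (le_max_left _ _).trans h1
    refine ⟨α_nonneg, fun i => ?_⟩
    obtain ⟨φp, hp, hp1, hp2⟩ := (plus i).1 fun x y hxy => by
      have h1 := h i x y hxy
      have h2 := le_max_right 0 (|(∑ j, w j * x j) - y| - ε)
      have h3 := neg_le_abs ((∑ j, w j * x j) - y)
      linarith
    obtain ⟨φm, hm, hm1, hm2⟩ := (minus i).1 fun x y hxy => by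
      have h1 := h i x y hxy
      have h2 := le_max_right 0 (|(∑ j, w j * x j) - y| - ε)
      have h3 := le_abs_self ((∑ j, w j * x j) - y)
      linarith
    exact ⟨φp, φm, hp, hm, by linarith, by linarith, hp2, hm2⟩
  · rintro ⟨hα, h⟩ i x y hxy
    obtain ⟨φp, φm, hp, hm, hp1, hm1, hp2, hm2⟩ := h i
    have h1 := (plus i).2 ⟨φp, hp, by linarith, hp2⟩ x y hxy
    have h2 := (minus i).2 ⟨φm, hm, by linarith, hm2⟩ x y hxy
    have h3 : 0 ≤ lam * (nn (x - xhat i) + κ * |y - yhat i|) :=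
      mul_nonneg hlam (add_nonneg (hnn_nonneg _) (by positivity))
    rw [sub_le_iff_le_add]
    refine max_le (by linarith [hα i]) ?_
    rw [sub_le_iff_le_add]
    exact abs_le'.2 ⟨by linarith, by linarith⟩
end

section
/- Let ‖·‖ be a norm on ℝ^n with dual norm ‖·‖_*, and let κ > 0. Let X = {x ∈ ℝ^n : Cx ≤ d} with C ∈ ℝ^{r×n}, d ∈ ℝ^r, and assume there is a Slater point x_S with Cx_S < d. Fix data x̂_i ∈ X and labels ŷ_i ∈ {−1, +1} for i = 1, …, N. Then for (λ, α, w) ∈ ℝ₊ × ℝ^N × ℝ^n the following are equivalent: (a) for every i, sup over x ∈ X and y ∈ {−1, +1} of [max{0, 1 − y·⟨w, x⟩} − λ·(‖x − x̂_i‖ + κ·𝟙{y ≠ ŷ_i})] ≤ α_i; (b) α ∈ ℝ₊^N and for every i there exist φ_i⁺, φ_i⁻ ∈ ℝ₊^r with: 1 − ŷ_i·⟨w, x̂_i⟩ + ⟨φ_i⁺, d − Cx̂_i⟩ ≤ α_i; 1 + ŷ_i·⟨w, x̂_i⟩ + ⟨φ_i⁻, d − Cx̂_i⟩ − κλ ≤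 α_i; ‖Cᵀφ_i⁺ + ŷ_i·w‖_* ≤ λ; and ‖Cᵀφ_i⁻ − ŷ_i·w‖_* ≤ λ. -/
/-- Lagrange duality for a convex program with a Slater point: a convex function that is
nonnegative on the feasible set `{v | ∀ k, h k v ≤ 0}` has a nonnegative Lagrangian for suitable
nonnegative multipliers. -/
theorem exists_lagrange_multipliers {E ι : Type*} [AddCommGroup E] [Module ℝ E] [Fintype ι]
    {g : E → ℝ} {h : ι → E → ℝ} (hg : ConvexOn ℝ Set.univ g)
    (hh : ∀ k, ConvexOn ℝ Set.univ (h k)) {vS : E} (hS : ∀ k, h k vS < 0)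
    (hgh : ∀ v, (∀ k, h k v ≤ 0) → 0 ≤ g v) :
    ∃ φ : ι → ℝ, (∀ k, 0 ≤ φ k) ∧ ∀ v, 0 ≤ g v + ∑ k, φ k * h k v := by
  classical
  set A : Set (ℝ × (ι → ℝ)) := {p | ∃ v, g v < p.1 ∧ ∀ k, h k v < p.2 k} with hA
  have hAconv : Convex ℝ A := by
    rintro p ⟨v, hv, hv'⟩ q ⟨u, hu, hu'⟩ a b ha hb hab
    have combine : ∀ x y x' y' : ℝ, x < x' → y < y' → a * x + b * y < a * x' + b * y' := by
      intro x y x' y' hx hy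
      rcases ha.eq_or_lt with rfl | ha'
      · obtain rfl : b = 1 := by linarith
        linarith
      · exact add_lt_add_of_lt_of_le (mul_lt_mul_of_pos_left hx ha')
          (mul_le_mul_of_nonneg_left hy.le hb)
    refine ⟨a • v + b • u, ?_, fun k => ?_⟩
    · exact (hg.2 trivial trivial ha hb hab).trans_lt (combine _ _ _ _ hv hu)
    · exact ((hh k).2 trivial trivial ha hb hab).trans_lt (combine _ _ _ _ (hv' k) (hu' k))
  have hAopen : IsOpen A := by
    have hA' : A = ⋃ v, ({p | g v < p.1} ∩ ⋂ k, {p | h k v < p.2 k}) := by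
      ext p
      simp [hA]
    rw [hA']
    refine isOpen_iUnion fun v => (isOpen_lt (by fun_prop) (by fun_prop)).inter
      (isOpen_iInter_of_finite fun k => isOpen_lt (by fun_prop) (by fun_prop))
  have h0 : (0 : ℝ × (ι → ℝ)) ∉ A := by
    rintro ⟨v, hv, hv'⟩
    exact absurd (hgh v fun k => (hv' k).le) (not_le.2 hv)
  obtain ⟨f, hf⟩ := geometric_hahn_banach_point_open hAconv hAopen h0
  set μ : ℝ := f (1, 0) with hμ
  set ψ : ι → ℝ := fun k => f (0, Pi.single k 1) with hψ
  have hrepr : ∀ s z, f (s, z) = μ * s + ∑ k, ψ k * z k := by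
    intro s z
    have hz : ((s, z) : ℝ × (ι → ℝ))
        = s • (1, 0) + ∑ k, z k • ((0, Pi.single k 1) : ℝ × (ι → ℝ)) := by
      refine Prod.ext ?_ ?_
      · simp [Prod.fst_sum]
      · ext j
        simp [Prod.snd_sum, Finset.sum_apply, Pi.single_apply]
    rw [hz, map_add, map_sum, map_smul]
    simp only [map_smul, smul_eq_mul, hμ, hψ]
    congr 1
    · ring
    · exact Finset.sum_congr rfl fun k _ => mul_comm _ _
  have hpos : ∀ (v : E) (s : ℝ) (z : ι → ℝ), g v < s → (∀ k, h k v < z k) → 0 < μ * s + ∑ k, ψ k * z k := by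
    intro v s z hs hz
    have := hf (s, z) ⟨v, hs, hz⟩
    rwa [map_zero, hrepr] at this
  have nonneg_of_ray : ∀ a b : ℝ, (∀ t : ℝ, 0 ≤ t → 0 < b + a * t) → 0 ≤ a := by
    intro a b hab
    by_contra! ha
    have hb := hab 0 le_rfl
    have := hab (b / -a) (div_nonneg (by linarith) (by linarith))
    have e : a * (b / -a) = -b := by
      rw [div_neg, mul_neg, mul_div_cancel₀ _ ha.ne]
    linarith
  have hμ0 : 0 ≤ μ := by
    refine nonneg_of_ray μ (μ * (g vS + 1) + ∑ k, ψ k * 0) fun t ht => ?_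
    have := hpos vS (g vS + 1 + t) (fun _ => 0) (by linarith) hS
    linarith
  have hψ0 : ∀ k, 0 ≤ ψ k := by
    intro k
    refine nonneg_of_ray (ψ k) (μ * (g vS + 1)) fun t ht => ?_
    have := hpos vS (g vS + 1) (Pi.single k t) (by linarith) fun j =>
      (hS j).trans_le (by rw [Pi.single_apply]; split_ifs <;> simp [ht])
    simpa [Pi.single_apply] using this
  have hμpos : 0 < μ := by
    refine hμ0.lt_of_ne fun hμz => ?_
    have := hpos vS (g vS + 1) (fun k => h k vS / 2) (by linarith)
      fun k => by linarith [hS k]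
    rw [← hμz, zero_mul, zero_add] at this
    exact absurd this (not_lt.2 (Finset.sum_nonpos fun k _ =>
      mul_nonpos_of_nonneg_of_nonpos (hψ0 k) (by linarith [hS k])))
  have hlag : ∀ v, 0 ≤ μ * g v + ∑ k, ψ k * h k v := by
    intro v
    have hc : Filter.Tendsto (fun ε : ℝ => μ * (g v + ε) + ∑ k, ψ k * (h k v + ε))
        (nhdsWithin 0 (Set.Ioi 0)) (nhds (μ * (g v + 0) + ∑ k, ψ k * (h k v + 0))) :=
      tendsto_nhdsWithin_of_tendsto_nhds (Continuous.tendsto (by fun_prop) 0)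
    simp only [add_zero] at hc
    refine ge_of_tendsto hc ?_
    filter_upwards [self_mem_nhdsWithin] with ε hε
    have hε' : 0 < ε := hε
    exact (hpos v _ _ (by linarith) fun k => by linarith).le
  refine ⟨fun k => ψ k / μ, fun k => div_nonneg (hψ0 k) hμ0, fun v => ?_⟩
  have e : g v + ∑ k, ψ k / μ * h k v = (μ * g v + ∑ k, ψ k * h k v) / μ := by
    rw [add_div, Finset.sum_div, mul_div_cancel_left₀ _ hμpos.ne']
    congr 1
    exact Finset.sum_congr rfl fun k _ => by ring
  rw [e]
  exact div_nonneg (hlag v) hμ0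

/-- The dual norm of `v` is at most `c ≥ 0` iff `⟨v, u⟩ ≤ c ‖u‖` for all `u`. -/
theorem dual_norm_le_iff {n : ℕ} {nn dn : (Fin n → ℝ) → ℝ}
    (hnn_nonneg : ∀ x, 0 ≤ nn x) (hnn_def : ∀ x, nn x = 0 ↔ x = 0)
    (hnn_smul : ∀ (c : ℝ) x, nn (c • x) = |c| * nn x)
    (hdn : ∀ v, IsLUB {ρ : ℝ | ∃ u, nn u ≤ 1 ∧ ρ = ∑ j, v j * u j} (dn v))
    {c : ℝ} (hc : 0 ≤ c) (v : Fin n → ℝ) :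
    dn v ≤ c ↔ ∀ u, v ⬝ᵥ u ≤ c * nn u := by
  rw [isLUB_le_iff (hdn v)]
  constructor
  · intro hv u
    by_cases hu : u = 0
    · simp [hu, (hnn_def 0).2 rfl]
    have hpos : 0 < nn u := (hnn_nonneg u).lt_of_ne fun e => hu ((hnn_def u).1 e.symm)
    have h1 : nn ((nn u)⁻¹ • u) ≤ 1 := by
      rw [hnn_smul, abs_of_pos (inv_pos.2 hpos), inv_mul_cancel₀ hpos.ne']
    have h2 : v ⬝ᵥ ((nn u)⁻¹ • u) ≤ c := hv ⟨_, h1, rfl⟩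
    rw [dotProduct_smul, smul_eq_mul] at h2
    rwa [inv_mul_le_iff₀ hpos, mul_comm] at h2
  · rintro hv _ ⟨u, hu, rfl⟩
    exact (hv u).trans (mul_le_of_le_one_right hc hu)

/-- Robust counterpart of an affine function over a polyhedron with a norm penalty: strong
duality for `sup {a - ⟨q, x⟩ - c ‖x - x₀‖ : C x ≤ d}`. -/
theorem affine_sub_norm_le_iff {n r : ℕ} {nn dn : (Fin n → ℝ) → ℝ}
    (hnn_nonneg : ∀ x, 0 ≤ nn x) (hnn_def : ∀ x, nn x = 0 ↔ x = 0)
    (hnn_add : ∀ x y, nn (x + y) ≤ nn x + nn y)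
    (hnn_smul : ∀ (c : ℝ) x, nn (c • x) = |c| * nn x)
    (hdn : ∀ v, IsLUB {ρ : ℝ | ∃ u, nn u ≤ 1 ∧ ρ = ∑ j, v j * u j} (dn v))
    (C : Matrix (Fin r) (Fin n) ℝ) (d : Fin r → ℝ) {xS : Fin n → ℝ}
    (hSlater : ∀ k, C k ⬝ᵥ xS < d k) (x₀ q : Fin n → ℝ) {c : ℝ} (hc : 0 ≤ c) (a : ℝ) :
    (∀ x, (∀ k, C k ⬝ᵥ x ≤ d k) → a - q ⬝ᵥ x - c * nn (x - x₀) ≤ 0) ↔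
      ∃ φ : Fin r → ℝ, (∀ k, 0 ≤ φ k) ∧
        a - q ⬝ᵥ x₀ + ∑ k, φ k * (d k - C k ⬝ᵥ x₀) ≤ 0 ∧
        dn (fun j => (∑ k, C k j * φ k) + q j) ≤ c := by
  simp_rw [dual_norm_le_iff hnn_nonneg hnn_def hnn_smul hdn hc]
  have hnn_zero : nn 0 = 0 := (hnn_def 0).2 rfl
  have hnn_neg : ∀ u, nn (-u) = nn u := fun u => by simpa using hnn_smul (-1) u
  have expand : ∀ (φ : Fin r → ℝ) (u : Fin n → ℝ),
      (fun j => (∑ k, C k j * φ k) + q j) ⬝ᵥ u = ∑ k, φ k * C k ⬝ᵥ u + q ⬝ᵥ u := by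
    intro φ u
    simp only [dotProduct, add_mul, Finset.sum_add_distrib, Finset.sum_mul, Finset.mul_sum]
    rw [Finset.sum_comm]
    congr 1
    exact Finset.sum_congr rfl fun k _ => Finset.sum_congr rfl fun j _ => by ring
  simp_rw [expand]
  constructor
  · intro H
    have hg : ConvexOn ℝ Set.univ fun v => q ⬝ᵥ (x₀ + v) + c * nn v - a := by
      refine ⟨convex_univ, fun x _ y _ s t hs ht hst => ?_⟩
      have hn : nn (s • x + t • y) ≤ s * nn x + t * nn y := by
        have := hnn_add (s • x) (t • y)
        rwa [hnn_smul, hnn_smul, abs_of_nonneg hs, abs_of_nonneg ht] at this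
      have hn' := mul_le_mul_of_nonneg_left hn hc
      obtain rfl : t = 1 - s := by linarith
      simp only [dotProduct_add, dotProduct_smul, smul_eq_mul] at hn' ⊢
      linarith
    have hh : ∀ k, ConvexOn ℝ Set.univ fun v => C k ⬝ᵥ (x₀ + v) - d k := by
      intro k
      refine ⟨convex_univ, fun x _ y _ s t hs ht hst => ?_⟩
      obtain rfl : t = 1 - s := by linarith
      simp only [dotProduct_add, dotProduct_smul, smul_eq_mul]
      linarith
    have hS : ∀ k, C k ⬝ᵥ (x₀ + (xS - x₀)) - d k < 0 := by
      intro k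
      simpa using hSlater k
    have hgh : ∀ v, (∀ k, C k ⬝ᵥ (x₀ + v) - d k ≤ 0) → 0 ≤ q ⬝ᵥ (x₀ + v) + c * nn v - a := by
      intro v hv
      have := H (x₀ + v) fun k => sub_nonpos.1 (hv k)
      rw [add_sub_cancel_left] at this
      linarith
    obtain ⟨φ, hφ, hL⟩ := exists_lagrange_multipliers hg hh hS hgh
    have split : ∀ v, ∑ k, φ k * (C k ⬝ᵥ (x₀ + v) - d k)
        = ∑ k, φ k * C k ⬝ᵥ v - ∑ k, φ k * (d k - C k ⬝ᵥ x₀) := by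
      intro v
      rw [← Finset.sum_sub_distrib]
      refine Finset.sum_congr rfl fun k _ => ?_
      rw [dotProduct_add]
      ring
    simp only [split] at hL
    simp only [dotProduct_add] at hL
    refine ⟨φ, hφ, ?_, fun u => ?_⟩
    · have := hL 0
      simp only [dotProduct_zero, mul_zero, Finset.sum_const_zero, hnn_zero] at this
      linarith
    · by_contra! hu
      set s := ∑ k, φ k * C k ⬝ᵥ u with hs
      set b := q ⬝ᵥ x₀ - a - ∑ k, φ k * (d k - C k ⬝ᵥ x₀) with hb
      have ray : ∀ t : ℝ, 0 ≤ t → 0 ≤ b - t * (s + q ⬝ᵥ u - c * nn u) := by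
        intro t ht
        have h1 := hL (-(t • u))
        have h2 : ∑ k, φ k * C k ⬝ᵥ (-(t • u)) = -(t * s) := by
          rw [hs, Finset.mul_sum, ← Finset.sum_neg_distrib]
          refine Finset.sum_congr rfl fun k _ => ?_
          rw [dotProduct_neg, dotProduct_smul, smul_eq_mul]
          ring
        rw [h2, hnn_neg, hnn_smul, abs_of_nonneg ht, dotProduct_neg, dotProduct_smul,
          smul_eq_mul] at h1
        linarith
      have hδ : 0 < s + q ⬝ᵥ u - c * nn u := by linarith
      have hb0 := ray 0 le_rfl
      rw [zero_mul, sub_zero] at hb0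
      have := ray ((b + 1) / (s + q ⬝ᵥ u - c * nn u)) (by positivity)
      rw [div_mul_cancel₀ _ hδ.ne'] at this
      linarith
  · rintro ⟨φ, hφ, h1, h2⟩ x hx
    have h3 := h2 (x₀ - x)
    rw [← hnn_neg, neg_sub] at h3
    have h4 : ∑ k, φ k * C k ⬝ᵥ (x₀ - x) + ∑ k, φ k * (d k - C k ⬝ᵥ x₀)
        = ∑ k, φ k * (d k - C k ⬝ᵥ x) := by
      rw [← Finset.sum_add_distrib]
      refine Finset.sum_congr rfl fun k _ => ?_
      rw [dotProduct_sub]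
      ring
    have h5 : 0 ≤ ∑ k, φ k * (d k - C k ⬝ᵥ x) :=
      Finset.sum_nonneg fun k _ => mul_nonneg (hφ k) (sub_nonneg.2 (hx k))
    rw [dotProduct_sub q] at h3
    linarith

/-- Corollary (SVM) of the paper: characterization of `(λ, α, w) ∈ Ω_s` for distributionally
robust SVM with hinge loss, polyhedral feature support set `X = {x : Cx ≤ d}` admitting a
Slater point, and classification transport cost
`d_C((x,y),(x',y')) = ‖x − x'‖ + κ·𝟙{y ≠ y'}` on `ℝ^n × {−1, +1}`. Here `nn` is a norm on
`ℝ^n` and `dn` is its dual norm. -/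
theorem drfl_svm_omega
    (n N r : ℕ) (κ : ℝ) (hκ : 0 < κ)
    (nn : (Fin n → ℝ) → ℝ)
    (hnn_nonneg : ∀ x, 0 ≤ nn x)
    (hnn_def : ∀ x, nn x = 0 ↔ x = 0)
    (hnn_add : ∀ x y, nn (x + y) ≤ nn x + nn y)
    (hnn_smul : ∀ (c : ℝ) x, nn (c • x) = |c| * nn x)
    (dn : (Fin n → ℝ) → ℝ)
    (hdn : ∀ v, IsLUB {ρ : ℝ | ∃ u, nn u ≤ 1 ∧ ρ = ∑ j, v j * u j} (dn v))
    (C : Fin r → Fin n → ℝ) (d : Fin r → ℝ)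
    (xS : Fin n → ℝ) (hSlater : ∀ k, (∑ j, C k j * xS j) < d k)
    (xhat : Fin N → Fin n → ℝ) (hdata : ∀ i k, (∑ j, C k j * xhat i j) ≤ d k)
    (yhat : Fin N → ℝ) (hyhat : ∀ i, yhat i = 1 ∨ yhat i = -1)
    (lam : ℝ) (hlam : 0 ≤ lam) (α : Fin N → ℝ) (w : Fin n → ℝ) :
    (∀ i, ∀ x : Fin n → ℝ, (∀ k, (∑ j, C k j * x j) ≤ d k) →
        ∀ y : ℝ, (y = 1 ∨ y = -1) →
        max 0 (1 - y * ∑ j, w j * x j)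
          - lam * (nn (x - xhat i) + κ * (if y = yhat i then 0 else 1)) ≤ α i)
    ↔
    ((∀ i, 0 ≤ α i) ∧ ∀ i, ∃ φp φm : Fin r → ℝ,
      (∀ k, 0 ≤ φp k) ∧ (∀ k, 0 ≤ φm k) ∧
      1 - yhat i * (∑ j, w j * xhat i j) +
        (∑ k, φp k * (d k - ∑ j, C k j * xhat i j)) ≤ α i ∧
      1 + yhat i * (∑ j, w j * xhat i j) +
        (∑ k, φm k * (d k - ∑ j, C k j * xhat i j)) - κ * lam ≤ α i ∧
      dn (fun j => (∑ k, C k j * φp k) + yhat i * w j) ≤ lam ∧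
      dn (fun j => (∑ k, C k j * φm k) - yhat i * w j) ≤ lam) := by
  have key : ∀ i (s b : ℝ),
      (∀ x : Fin n → ℝ, (∀ k, (∑ j, C k j * x j) ≤ d k) →
        1 - s * (∑ j, w j * x j) - lam * nn (x - xhat i) ≤ b) ↔
      ∃ φ : Fin r → ℝ, (∀ k, 0 ≤ φ k) ∧
        1 - s * (∑ j, w j * xhat i j) + (∑ k, φ k * (d k - ∑ j, C k j * xhat i j)) ≤ b ∧
        dn (fun j => (∑ k, C k j * φ k) + s * w j) ≤ lam := by
    intro i s b
    have hq : ∀ x : Fin n → ℝ, (s • w) ⬝ᵥ x = s * ∑ j, w j * x j := fun x => smul_dotProduct s w x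
    have main := affine_sub_norm_le_iff hnn_nonneg hnn_def hnn_add hnn_smul hdn C d hSlater
      (xhat i) (s • w) hlam (1 - b)
    simp only [hq] at main
    refine (forall₂_congr fun x _ => ?_).trans (main.trans (exists_congr fun φ =>
      and_congr_right fun _ => and_congr_left fun _ => ?_))
    · constructor <;> intro h <;> linarith
    · simp only [dotProduct]
      constructor <;> intro h <;> linarith
  have hne : ∀ i, -yhat i ≠ yhat i := fun i => by
    rcases hyhat i with h | h <;> rw [h] <;> norm_num
  have hneg : ∀ i, -yhat i = 1 ∨ -yhat i = -1 := fun i => by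
    rcases hyhat i with h | h <;> simp [h]
  constructor
  · intro H
    refine ⟨fun i => ?_, fun i => ?_⟩
    · have := H i (xhat i) (hdata i) (yhat i) (hyhat i)
      rw [sub_self, (hnn_def 0).2 rfl, if_pos rfl] at this
      linarith [le_max_left 0 (1 - yhat i * ∑ j, w j * xhat i j)]
    · obtain ⟨φp, hp, hp1, hp2⟩ := (key i (yhat i) (α i)).1 fun x hx => by
        have := H i x hx (yhat i) (hyhat i)
        rw [if_pos rfl] at this
        linarith [le_max_right 0 (1 - yhat i * ∑ j, w j * x j)]
      obtain ⟨φm, hm, hm1, hm2⟩ := (key i (-yhat i) (α i + κ * lam)).1 fun x hx => by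
        have := H i x hx (-yhat i) (hneg i)
        rw [if_neg (hne i)] at this
        linarith [le_max_right 0 (1 - -yhat i * ∑ j, w j * x j)]
      refine ⟨φp, φm, hp, hm, hp1, by linarith, hp2, ?_⟩
      simpa only [neg_mul, ← sub_eq_add_neg] using hm2
  · rintro ⟨hα, H⟩ i x hx y hy
    obtain ⟨φp, φm, hp, hm, hp1, hm1, hp2, hm2⟩ := H i
    have hpx := (key i (yhat i) (α i)).2 ⟨φp, hp, hp1, hp2⟩ x hx
    have hmx := (key i (-yhat i) (α i + κ * lam)).2 ⟨φm, hm, by linarith, by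
      simpa only [neg_mul, ← sub_eq_add_neg] using hm2⟩ x hx
    have hn : 0 ≤ lam * nn (x - xhat i) := mul_nonneg hlam (hnn_nonneg _)
    have hκl : 0 ≤ lam * κ := mul_nonneg hlam hκ.le
    rw [sub_le_iff_le_add]
    by_cases h : y = yhat i
    · rw [if_pos h, h]
      exact max_le (by linarith [hα i]) (by linarith)
    · obtain rfl : y = -yhat i := by
        rcases hy with rfl | rfl <;> rcases hyhat i with h' | h' <;> simp_all
      rw [if_neg h]
      exact max_le (by linarith [hα i]) (by linarith)
end

section
/- Let ‖·‖ be a norm on ℝ^n with dual norm ‖·‖_*, let κ > 0, and let X = {x ∈ ℝ^n : −e ≤ x ≤ e}, where e is the all-ones vector. Fix data x̂_i ∈ X and labels ŷ_i ∈ {−1, +1} for i = 1, …, N. Then for (λ, α, w) ∈ ℝ₊ × ℝ^N × ℝ^n the following are equivalent: (a) for every i, sup over x ∈ X and y ∈ {−1, +1} of [max{0, 1 − y·⟨w, x⟩} − λ·(‖x − x̂_i‖ + κ·𝟙{y ≠ ŷ_i})] ≤ α_i; (b) α ∈ ℝ₊^N and for every i there exist π_i⁺, π_i⁻, τ_i⁺,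 τ_i⁻ ∈ ℝ₊^n with: 1 + ⟨−ŷ_i·w − π_i⁺ + τ_i⁺, x̂_i⟩ + ⟨π_i⁺ + τ_i⁺, e⟩ ≤ α_i; 1 + ⟨ŷ_i·w − π_i⁻ + τ_i⁻, x̂_i⟩ + ⟨π_i⁻ + τ_i⁻, e⟩ − κλ ≤ α_i; ‖π_i⁺ − τ_i⁺ + ŷ_i·w‖_* ≤ λ; and ‖π_i⁻ − τ_i⁻ − ŷ_i·w‖_* ≤ λ. -/
/-- A bound on the dual norm is the same as the corresponding Hölder inequality. -/
theorem dualNorm_le_iff_forall_sum_le {n : ℕ} {nn dn : (Fin n → ℝ) → ℝ}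
    (hnn_nonneg : ∀ x, 0 ≤ nn x) (hnn_def : ∀ x, nn x = 0 ↔ x = 0)
    (hnn_smul : ∀ (c : ℝ) x, nn (c • x) = |c| * nn x)
    (hdn : ∀ v, IsLUB {ρ : ℝ | ∃ u, nn u ≤ 1 ∧ ρ = ∑ j, v j * u j} (dn v))
    {lam : ℝ} (hlam : 0 ≤ lam) (q : Fin n → ℝ) :
    dn q ≤ lam ↔ ∀ u : Fin n → ℝ, ∑ j, q j * u j ≤ lam * nn u := by
  rw [isLUB_le_iff (hdn q)]
  constructor
  · intro h u
    rcases eq_or_ne u 0 with rfl | hu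
    · simp [(hnn_def 0).2 rfl]
    · have hpos : 0 < nn u := lt_of_le_of_ne (hnn_nonneg u) fun h0 => hu ((hnn_def u).1 h0.symm)
      have hle : ∑ j, q j * ((nn u)⁻¹ • u) j ≤ lam := by
        refine h ⟨(nn u)⁻¹ • u, ?_, rfl⟩
        rw [hnn_smul, abs_of_pos (inv_pos.2 hpos), inv_mul_cancel₀ hpos.ne']
      have hsum : ∑ j, q j * ((nn u)⁻¹ • u) j = (∑ j, q j * u j) / nn u := by
        rw [Finset.sum_div]
        refine Finset.sum_congr rfl fun j _ => ?_
        simp only [Pi.smul_apply, smul_eq_mul]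
        ring
      rwa [hsum, div_le_iff₀ hpos] at hle
  · rintro h ρ ⟨u, hu, rfl⟩
    exact (h u).trans (mul_le_of_le_one_right hlam hu)

/-- The sandwich theorem for a linear function on the unit box that lies below a multiple of a
norm centred at a point of the box. -/
theorem exists_linear_between_box_and_norm {n : ℕ} {nn : (Fin n → ℝ) → ℝ}
    (hnn_zero : nn 0 = 0)
    (hnn_add : ∀ x y, nn (x + y) ≤ nn x + nn y)
    (hnn_smul : ∀ (c : ℝ) x, nn (c • x) = |c| * nn x)
    {lam : ℝ} (hlam : 0 ≤ lam) {a : Fin n → ℝ} (ha : ∀ j, -1 ≤ a j ∧ a j ≤ 1)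
    {v : Fin n → ℝ} {c : ℝ}
    (h : ∀ x : Fin n → ℝ, (∀ j, -1 ≤ x j ∧ x j ≤ 1) →
      ∑ j, v j * x j - lam * nn (x - a) ≤ c) :
    ∃ p : Fin n → ℝ, (∀ u : Fin n → ℝ, ∑ j, p j * u j ≤ lam * nn u) ∧
      ∀ x : Fin n → ℝ, (∀ j, -1 ≤ x j ∧ x j ≤ 1) →
        ∑ j, (v j - p j) * x j + ∑ j, p j * a j ≤ c := by
  have hconv : ConvexOn ℝ Set.univ fun x : Fin n → ℝ => lam * nn (x - a) := by
    refine ⟨convex_univ, fun x _ y _ s t hs ht hst => ?_⟩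
    have hx : s • x + t • y - a = s • (x - a) + t • (y - a) := by
      rw [smul_sub, smul_sub, sub_add_sub_comm, ← add_smul, hst, one_smul]
    have hle := hnn_add (s • (x - a)) (t • (y - a))
    rw [hnn_smul, hnn_smul, abs_of_nonneg hs, abs_of_nonneg ht] at hle
    simp only [hx, smul_eq_mul]
    nlinarith [mul_le_mul_of_nonneg_left hle hlam]
  have hcont : Continuous fun x : Fin n → ℝ => lam * nn (x - a) :=
    continuousOn_univ.1 (hconv.continuousOn isOpen_univ)
  let A : Set ((Fin n → ℝ) × ℝ) := {z | lam * nn (z.1 - a) < z.2}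
  let B : Set ((Fin n → ℝ) × ℝ) :=
    {z | (∀ j, -1 ≤ z.1 j ∧ z.1 j ≤ 1) ∧ z.2 ≤ ∑ j, v j * z.1 j - c}
  have hA : Convex ℝ A := by
    simpa [A] using hconv.convex_strict_epigraph
  have hAo : IsOpen A := isOpen_lt (hcont.comp continuous_fst) continuous_snd
  have hB : Convex ℝ B := by
    rintro ⟨x, r⟩ ⟨hx, hr⟩ ⟨y, r'⟩ ⟨hy, hr'⟩ s t hs ht hst
    refine ⟨fun j => ?_, ?_⟩
    · have := hx j
      have := hy j
      simp only [Prod.fst_add, Prod.smul_fst, Pi.add_apply, Pi.smul_apply, smul_eq_mul] at *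
      constructor <;> nlinarith
    · have hsum : ∑ j, v j * (s • x + t • y) j = s * ∑ j, v j * x j + t * ∑ j, v j * y j := by
        rw [Finset.mul_sum, Finset.mul_sum, ← Finset.sum_add_distrib]
        refine Finset.sum_congr rfl fun j _ => ?_
        simp only [Pi.add_apply, Pi.smul_apply, smul_eq_mul]
        ring
      simp only [Prod.fst_add, Prod.smul_fst, Prod.snd_add, Prod.smul_snd, smul_eq_mul] at *
      rw [hsum]
      have hc : c = s * c + t * c := by rw [← add_mul, hst, one_mul]
      nlinarith [mul_le_mul_of_nonneg_left hr hs, mul_le_mul_of_nonneg_left hr' ht]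
  have hdisj : Disjoint A B := by
    rw [Set.disjoint_left]
    rintro ⟨x, r⟩ hxA ⟨hx, hr⟩
    have := h x hx
    simp only [A, Set.mem_ofPred_eq] at hxA hr
    linarith
  obtain ⟨f, b, hfA, hfB⟩ := geometric_hahn_banach_open hA hAo hB hdisj
  set s : ℝ := f (0, 1)
  have hf : ∀ (x : Fin n → ℝ) (r : ℝ), f (x, r) = ∑ j, f (Pi.single j 1, 0) * x j + r * s := by
    intro x r
    have hx : (x, r) = ∑ j, x j • ((Pi.single j 1, 0) : (Fin n → ℝ) × ℝ) + r • (0, 1) := by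
      ext j
      · simp [Prod.fst_sum, Finset.sum_apply, Pi.single_apply]
      · simp [Prod.snd_sum]
    rw [hx, map_add, map_sum, map_smul, smul_eq_mul]
    congr 1
    refine Finset.sum_congr rfl fun j _ => ?_
    rw [map_smul, smul_eq_mul, mul_comm]
  set ℓ : Fin n → ℝ := fun j => f (Pi.single j 1, 0)
  have hfA' : ∀ x r, lam * nn (x - a) < r → ∑ j, ℓ j * x j + r * s < b := fun x r hr => by
    rw [← hf]; exact hfA (x, r) hr
  have hfB' : ∀ x : Fin n → ℝ, (∀ j, -1 ≤ x j ∧ x j ≤ 1) →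
      b ≤ ∑ j, ℓ j * x j + (∑ j, v j * x j - c) * s := fun x hx => by
    rw [← hf]; exact hfB (x, _) ⟨hx, le_rfl⟩
  have hs : s < 0 := by
    have hB := hfB' a ha
    have hle := h a ha
    simp only [sub_self, hnn_zero, mul_zero, sub_zero] at hle
    have hA := hfA' a 1 (by simp [hnn_zero])
    nlinarith
  have hup : ∀ x, ∑ j, ℓ j * x j + lam * nn (x - a) * s ≤ b := by
    intro x
    refine le_of_forall_pos_le_add fun ε hε => ?_
    have hlt := hfA' x (lam * nn (x - a) + ε / -s) (by
      have := div_pos hε (neg_pos.2 hs)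
      linarith)
    have he : ε / -s * s = -ε := by
      rw [div_neg, neg_mul, div_mul_cancel₀ _ hs.ne]
    linarith [add_mul (lam * nn (x - a)) (ε / -s) s]
  have hup0 : ∑ j, ℓ j * a j ≤ b := by simpa [hnn_zero] using hup a
  have hlin : ∀ u, ∑ j, ℓ j * u j + lam * nn u * s ≤ 0 := by
    intro u
    by_contra! hpos
    set d := ∑ j, ℓ j * u j + lam * nn u * s
    set t : ℝ := (b - ∑ j, ℓ j * a j + 1) / d
    have ht : 0 ≤ t := div_nonneg (by linarith) hpos.le
    have htd : t * d = b - ∑ j, ℓ j * a j + 1 := div_mul_cancel₀ _ hpos.ne'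
    have hle := hup (a + t • u)
    rw [add_sub_cancel_left, hnn_smul, abs_of_nonneg ht] at hle
    have hsum : ∑ j, ℓ j * (a + t • u) j = ∑ j, ℓ j * a j + t * ∑ j, ℓ j * u j := by
      rw [Finset.mul_sum, ← Finset.sum_add_distrib]
      refine Finset.sum_congr rfl fun j _ => ?_
      simp only [Pi.add_apply, Pi.smul_apply, smul_eq_mul]
      ring
    rw [hsum] at hle
    simp only [d] at htd
    linarith
  have hscale : ∀ u : Fin n → ℝ, ∑ j, ℓ j / -s * u j = (∑ j, ℓ j * u j) / -s := fun u => by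
    rw [Finset.sum_div]
    exact Finset.sum_congr rfl fun j _ => by ring
  refine ⟨fun j => ℓ j / -s, fun u => ?_, fun x hx => ?_⟩
  · rw [hscale, div_le_iff₀ (neg_pos.2 hs)]
    linarith [hlin u]
  · have hB := hfB' x hx
    simp only [sub_mul, Finset.sum_sub_distrib, hscale]
    have hdiv : (∑ j, ℓ j * a j - ∑ j, ℓ j * x j) / -s ≤ c - ∑ j, v j * x j := by
      rw [div_le_iff₀ (neg_pos.2 hs)]
      linarith
    rw [sub_div] at hdiv
    linarith

/-- Dual characterization of an upper bound for a norm-penalized linear function on the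
unit box. -/
theorem forall_box_sub_norm_le_iff {n : ℕ} {nn dn : (Fin n → ℝ) → ℝ}
    (hnn_nonneg : ∀ x, 0 ≤ nn x) (hnn_def : ∀ x, nn x = 0 ↔ x = 0)
    (hnn_add : ∀ x y, nn (x + y) ≤ nn x + nn y)
    (hnn_smul : ∀ (c : ℝ) x, nn (c • x) = |c| * nn x)
    (hdn : ∀ v, IsLUB {ρ : ℝ | ∃ u, nn u ≤ 1 ∧ ρ = ∑ j, v j * u j} (dn v))
    {lam : ℝ} (hlam : 0 ≤ lam) {a : Fin n → ℝ} (ha : ∀ j, -1 ≤ a j ∧ a j ≤ 1)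
    (v : Fin n → ℝ) (c : ℝ) :
    (∀ x : Fin n → ℝ, (∀ j, -1 ≤ x j ∧ x j ≤ 1) → ∑ j, v j * x j - lam * nn (x - a) ≤ c) ↔
    ∃ π τ : Fin n → ℝ, (∀ j, 0 ≤ π j) ∧ (∀ j, 0 ≤ τ j) ∧
      ∑ j, (v j - π j + τ j) * a j + ∑ j, (π j + τ j) ≤ c ∧
      dn (fun j => π j - τ j - v j) ≤ lam := by
  have hdual := dualNorm_le_iff_forall_sum_le hnn_nonneg hnn_def hnn_smul hdn hlam
  have hneg : ∀ u, nn (-u) = nn u := fun u => by simpa using hnn_smul (-1) u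
  constructor
  · intro h
    obtain ⟨p, hp, hpc⟩ :=
      exists_linear_between_box_and_norm ((hnn_def 0).2 rfl) hnn_add hnn_smul hlam ha h
    refine ⟨fun j => (v j - p j)⁺, fun j => (v j - p j)⁻, fun j => posPart_nonneg _,
      fun j => negPart_nonneg _, ?_, ?_⟩
    · have hle := hpc (fun j => SignType.sign (v j - p j)) fun j => by
        rcases lt_trichotomy (v j - p j) 0 with h0 | h0 | h0 <;> simp [h0]
      simp only [self_mul_sign] at hle
      have hsub : ∀ j, v j - (v j - p j)⁺ + (v j - p j)⁻ = p j := fun j => by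
        linarith [posPart_sub_negPart (v j - p j)]
      simp only [hsub, posPart_add_negPart]
      linarith
    · rw [hdual]
      intro u
      have hu := hp (-u)
      rw [hneg] at hu
      refine le_of_eq_of_le (Finset.sum_congr rfl fun j _ => ?_) hu
      rw [posPart_sub_negPart, Pi.neg_apply]
      ring
  · rintro ⟨π, τ, hπ, hτ, hc, hd⟩ x hx
    have hu := (hdual _).1 hd (-(x - a))
    rw [hneg] at hu
    have hle : ∑ j, v j * x j ≤ ∑ j, ((v j - π j + τ j) * a j + (π j + τ j) +
        (π j - τ j - v j) * (-(x - a)) j) := by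
      refine Finset.sum_le_sum fun j _ => ?_
      simp only [Pi.neg_apply, Pi.sub_apply]
      nlinarith [mul_nonneg (hπ j) (sub_nonneg.2 (hx j).2),
        mul_nonneg (hτ j) (neg_le_iff_add_nonneg.1 (hx j).1)]
    rw [Finset.sum_add_distrib, Finset.sum_add_distrib] at hle
    linarith

/-- Proposition (SVM - Special Case 1) of the paper: characterization of `(λ, α, w) ∈ Ω_s`
for distributionally robust SVM with hinge loss, feature support set `X = [−1, 1]^n`, and
classification transport cost `d_C((x,y),(x',y')) = ‖x − x'‖ + κ·𝟙{y ≠ y'}` on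
`ℝ^n × {−1, +1}`. Here `nn` is a norm on `ℝ^n` and `dn` is its dual norm. -/
theorem drfl_svm_box_case1_omega
    (n N : ℕ) (κ : ℝ) (hκ : 0 < κ)
    (nn : (Fin n → ℝ) → ℝ)
    (hnn_nonneg : ∀ x, 0 ≤ nn x)
    (hnn_def : ∀ x, nn x = 0 ↔ x = 0)
    (hnn_add : ∀ x y, nn (x + y) ≤ nn x + nn y)
    (hnn_smul : ∀ (c : ℝ) x, nn (c • x) = |c| * nn x)
    (dn : (Fin n → ℝ) → ℝ)
    (hdn : ∀ v, IsLUB {ρ : ℝ | ∃ u, nn u ≤ 1 ∧ ρ = ∑ j, v j * u j} (dn v))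
    (xhat : Fin N → Fin n → ℝ) (hdata : ∀ i j, -1 ≤ xhat i j ∧ xhat i j ≤ 1)
    (yhat : Fin N → ℝ) (hyhat : ∀ i, yhat i = 1 ∨ yhat i = -1)
    (lam : ℝ) (hlam : 0 ≤ lam) (α : Fin N → ℝ) (w : Fin n → ℝ) :
    (∀ i, ∀ x : Fin n → ℝ, (∀ j, -1 ≤ x j ∧ x j ≤ 1) →
        ∀ y : ℝ, (y = 1 ∨ y = -1) →
        max 0 (1 - y * ∑ j, w j * x j)
          - lam * (nn (x - xhat i) + κ * (if y = yhat i then 0 else 1)) ≤ α i)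
    ↔
    ((∀ i, 0 ≤ α i) ∧ ∀ i, ∃ πp πm τp τm : Fin n → ℝ,
      (∀ j, 0 ≤ πp j) ∧ (∀ j, 0 ≤ πm j) ∧ (∀ j, 0 ≤ τp j) ∧ (∀ j, 0 ≤ τm j) ∧
      1 + (∑ j, (-(yhat i) * w j - πp j + τp j) * xhat i j) + (∑ j, (πp j + τp j)) ≤ α i ∧
      1 + (∑ j, (yhat i * w j - πm j + τm j) * xhat i j) + (∑ j, (πm j + τm j))
        - κ * lam ≤ α i ∧
      dn (fun j => πp j - τp j + yhat i * w j) ≤ lam ∧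
      dn (fun j => πm j - τm j - yhat i * w j) ≤ lam) := by
  have hnn0 : nn 0 = 0 := (hnn_def 0).2 rfl
  have key := fun i => forall_box_sub_norm_le_iff hnn_nonneg hnn_def hnn_add hnn_smul hdn hlam
    (hdata i)
  have hne : ∀ i, -yhat i ≠ yhat i := fun i => by
    rcases hyhat i with h | h <;> rw [h] <;> norm_num
  have hsum : ∀ (y : ℝ) (x : Fin n → ℝ), ∑ j, y * w j * x j = y * ∑ j, w j * x j := fun y x => by
    simp only [Finset.mul_sum, mul_assoc]
  constructor
  · intro h
    refine ⟨fun i => ?_, fun i => ?_⟩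
    · have hi := h i (xhat i) (hdata i) (yhat i) (hyhat i)
      simp only [sub_self, hnn0, if_true, mul_zero, add_zero, sub_zero] at hi
      exact (le_max_left _ _).trans hi
    · obtain ⟨πp, τp, hπp, hτp, hcp, hdp⟩ :=
        (key i (fun j => -(yhat i) * w j) (α i - 1)).1 fun x hx => by
          have hi := h i x hx (yhat i) (hyhat i)
          simp only [if_true, mul_zero, add_zero] at hi
          rw [hsum]
          linarith [le_max_right 0 (1 - yhat i * ∑ j, w j * x j)]
      obtain ⟨πm, τm, hπm, hτm, hcm, hdm⟩ :=
        (key i (fun j => yhat i * w j) (α i - 1 + κ * lam)).1 fun x hx => by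
          have hi := h i x hx (-yhat i) (by rcases hyhat i with h | h <;> simp [h])
          rw [if_neg (hne i)] at hi
          rw [hsum]
          linarith [le_max_right 0 (1 - -yhat i * ∑ j, w j * x j)]
      refine ⟨πp, πm, τp, τm, hπp, hπm, hτp, hτm, by linarith, by linarith, ?_, hdm⟩
      simpa only [neg_mul, sub_neg_eq_add] using hdp
  · rintro ⟨hα, h⟩ i x hx y hy
    obtain ⟨πp, πm, τp, τm, hπp, hπm, hτp, hτm, hcp, hcm, hdp, hdm⟩ := h i
    have hp := (key i (fun j => -(yhat i) * w j) (α i - 1)).2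
      ⟨πp, τp, hπp, hτp, by linarith, by simpa only [neg_mul, sub_neg_eq_add] using hdp⟩ x hx
    have hm := (key i (fun j => yhat i * w j) (α i - 1 + κ * lam)).2
      ⟨πm, τm, hπm, hτm, by linarith, hdm⟩ x hx
    rw [hsum] at hp hm
    have hnorm := mul_nonneg hlam (hnn_nonneg (x - xhat i))
    have hκlam := mul_nonneg hκ.le hlam
    rw [sub_le_iff_le_add]
    by_cases hyi : y = yhat i
    · rw [if_pos hyi, hyi]
      exact max_le (by linarith [hα i]) (by linarith)
    · have hyn : y = -yhat i := by
        rcases hy with h1 | h1 <;> rcases hyhat i with h2 | h2 <;> simp_all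
      rw [if_neg hyi, hyn]
      exact max_le (by linarith [hα i]) (by linarith)
end

section
/- Let ‖·‖ be a norm on ℝ^n with dual norm ‖·‖_*, let κ > 0, and let X = {x ∈ ℝ^n : 0 ≤ x ≤ e}, where e is the all-ones vector. Fix data x̂_i ∈ X and labels ŷ_i ∈ {−1, +1} for i = 1, …, N. Then for (λ, α, w) ∈ ℝ₊ × ℝ^N × ℝ^n the following are equivalent: (a) for every i, sup over x ∈ X and y ∈ {−1, +1} of [max{0, 1 − y·⟨w, x⟩} − λ·(‖x − x̂_i‖ + κ·𝟙{y ≠ ŷ_i})] ≤ α_i; (b) α ∈ ℝ₊^N and for every i there exist π_i⁺, π_i⁻, τ_i⁺, τ_i⁻ ∈ ℝ₊^n with: 1 + ⟨−ŷ_i·w − π_i⁺ + τ_i⁺, x̂_i⟩ + ⟨π_i⁺, e⟩ ≤ α_i; 1 + ⟨ŷ_i·w − π_i⁻ + τ_i⁻, x̂_i⟩ + ⟨π_i⁻, e⟩ − κλ ≤ α_i; ‖π_i⁺ − τ_i⁺ + ŷ_i·w‖_* ≤ λ; and ‖π_i⁻ − τ_i⁻ − ŷ_i·w‖_* ≤ λ.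 -/
/-- An absolutely homogeneous subadditive function on `Fin n → ℝ` is continuous. -/
lemma continuous_of_subadditive_of_abs_homogeneous {n : ℕ} {nn : (Fin n → ℝ) → ℝ}
    (hadd : ∀ x y, nn (x + y) ≤ nn x + nn y)
    (hsmul : ∀ (c : ℝ) x, nn (c • x) = |c| * nn x) : Continuous nn := by
  have hconv : ConvexOn ℝ Set.univ nn := by
    refine ⟨convex_univ, fun x _ y _ a b ha hb _ => ?_⟩
    have h := hadd (a • x) (b • y)
    rw [hsmul, hsmul, abs_of_nonneg ha, abs_of_nonneg hb] at h
    simpa using h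
  exact continuousOn_univ.mp (hconv.continuousOn isOpen_univ)

/-- If all positive multiples of `a` exceed those of `b` by at most a constant, then `a ≤ b`. -/
lemma le_of_forall_pos_mul_le_mul_add {a b c : ℝ} (h : ∀ k : ℝ, 0 < k → k * a ≤ k * b + c) :
    a ≤ b := by
  by_contra! hab
  have hd : 0 < a - b := sub_pos.mpr hab
  have hk := h ((|c| + 1) / (a - b)) (by positivity)
  have hcancel : (|c| + 1) / (a - b) * (a - b) = |c| + 1 := div_mul_cancel₀ _ hd.ne'
  have hc := le_abs_self c
  nlinarith

/-- Sandwich theorem: if the affine function `⟨v, ·⟩ - β` lies below `lam * nn (· - c)` on a convex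
set `K` containing `c`, then some linear functional `g` dominated by `lam * nn` lies between. -/
lemma exists_linear_between {n : ℕ} {nn : (Fin n → ℝ) → ℝ}
    (hadd : ∀ x y, nn (x + y) ≤ nn x + nn y)
    (hsmul : ∀ (c : ℝ) x, nn (c • x) = |c| * nn x)
    {lam : ℝ} (hlam : 0 ≤ lam) {K : Set (Fin n → ℝ)} (hK : Convex ℝ K)
    {c : Fin n → ℝ} (hc : c ∈ K) (v : (Fin n → ℝ) →ₗ[ℝ] ℝ) {β : ℝ}
    (h : ∀ x ∈ K, v x - lam * nn (x - c) ≤ β) :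
    ∃ g : (Fin n → ℝ) →ₗ[ℝ] ℝ, (∀ z, g z ≤ lam * nn z) ∧ ∀ x ∈ K, v x - β ≤ g (x - c) := by
  have hcont := continuous_of_subadditive_of_abs_homogeneous hadd hsmul
  have hzero : nn 0 = 0 := by simpa using hsmul 0 0
  let A : Set ((Fin n → ℝ) × ℝ) := {p | lam * nn (p.1 - c) < p.2}
  let B : Set ((Fin n → ℝ) × ℝ) := {p | p.1 ∈ K ∧ p.2 ≤ v p.1 - β}
  have hAopen : IsOpen A := isOpen_lt (by fun_prop) (by fun_prop)
  have hAconv : Convex ℝ A := by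
    intro p hp q hq a b ha hb hab
    simp only [A, Set.mem_ofPred_eq] at hp hq ⊢
    have hsplit : (a • p + b • q).1 - c = a • (p.1 - c) + b • (q.1 - c) := by
      obtain rfl : b = 1 - a := by linarith
      ext j
      simp
      ring
    have hle := hadd (a • (p.1 - c)) (b • (q.1 - c))
    rw [← hsplit, hsmul, hsmul, abs_of_nonneg ha, abs_of_nonneg hb] at hle
    have hle' := mul_le_mul_of_nonneg_left hle hlam
    have hlt : a * (lam * nn (p.1 - c)) + b * (lam * nn (q.1 - c)) < a * p.2 + b * q.2 := by
      rcases ha.eq_or_lt with rfl | ha'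
      · obtain rfl : b = 1 := by linarith
        simpa using hq
      · exact add_lt_add_of_lt_of_le (mul_lt_mul_of_pos_left hp ha')
          (mul_le_mul_of_nonneg_left hq.le hb)
    simp only [Prod.snd_add, Prod.smul_snd, smul_eq_mul]
    linarith
  have hBconv : Convex ℝ B := by
    rintro p ⟨hpK, hp⟩ q ⟨hqK, hq⟩ a b ha hb hab
    refine ⟨hK hpK hqK ha hb hab, ?_⟩
    simp only [Prod.snd_add, Prod.smul_snd, Prod.fst_add, Prod.smul_fst, smul_eq_mul, map_add,
      map_smul]
    obtain rfl : b = 1 - a := by linarith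
    nlinarith [mul_le_mul_of_nonneg_left hp ha, mul_le_mul_of_nonneg_left hq hb]
  have hdisj : Disjoint A B := by
    rw [Set.disjoint_left]
    rintro p hpA ⟨hpK, hp⟩
    have := h p.1 hpK
    simp only [A, Set.mem_ofPred_eq] at hpA
    linarith
  obtain ⟨f, u, hfA, hfB⟩ := geometric_hahn_banach_open hAconv hAopen hBconv hdisj
  let φ : (Fin n → ℝ) →ₗ[ℝ] ℝ := f.toLinearMap ∘ₗ LinearMap.inl ℝ _ _
  let s : ℝ := f (0, 1)
  have hf (x : Fin n → ℝ) (t : ℝ) : f (x, t) = φ x + t * s := by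
    have : (x, t) = (x, (0 : ℝ)) + t • ((0 : Fin n → ℝ), (1 : ℝ)) := by simp
    rw [this, map_add, map_smul]
    rfl
  have hA (x : Fin n → ℝ) (t : ℝ) (ht : lam * nn (x - c) < t) : φ x + t * s < u :=
    hf x t ▸ hfA (x, t) ht
  have hB (x : Fin n → ℝ) (hx : x ∈ K) : u ≤ φ x + (v x - β) * s :=
    hf x (v x - β) ▸ hfB (x, v x - β) ⟨hx, le_rfl⟩
  have hs : s < 0 := by
    have h1 := hA c (|v c - β| + 1) (by rw [sub_self, hzero, mul_zero]; positivity)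
    have h2 := hB c hc
    have h3 : 0 < |v c - β| + 1 - (v c - β) := by linarith [le_abs_self (v c - β)]
    nlinarith
  have hA' (x : Fin n → ℝ) : φ x + lam * nn (x - c) * s ≤ u := by
    refine le_of_forall_pos_le_add fun ε hε => ?_
    have h1 := hA x (lam * nn (x - c) + ε / (-s))
      (lt_add_of_pos_right _ (div_pos hε (neg_pos.mpr hs)))
    have h2 : ε / (-s) * s = -ε := by rw [div_neg, neg_mul, div_mul_cancel₀ _ hs.ne]
    nlinarith
  have huc : φ c ≤ u := by simpa [hzero] using hA' c
  refine ⟨(-s)⁻¹ • φ, fun z => ?_, fun x hx => ?_⟩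
  · have hs' : 0 < -s := neg_pos.mpr hs
    rw [LinearMap.smul_apply, smul_eq_mul, inv_mul_le_iff₀ hs']
    refine le_of_forall_pos_mul_le_mul_add (c := u - φ c) fun k hk => ?_
    have h1 := hA' (c + k • z)
    rw [add_sub_cancel_left, hsmul, abs_of_pos hk, map_add, map_smul, smul_eq_mul] at h1
    linarith
  · have hs' : 0 < -s := neg_pos.mpr hs
    rw [LinearMap.smul_apply, smul_eq_mul, le_inv_mul_iff₀ hs', map_sub]
    linarith [hB x hx]

/-- Generalized Cauchy–Schwarz inequality for a norm and a bound on its dual norm. -/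
lemma sum_mul_le_of_dual_le {n : ℕ} {nn : (Fin n → ℝ) → ℝ}
    (hnonneg : ∀ x, 0 ≤ nn x) (hdef : ∀ x, nn x = 0 ↔ x = 0)
    (hsmul : ∀ (c : ℝ) x, nn (c • x) = |c| * nn x) {v : Fin n → ℝ} {d lam : ℝ}
    (hd : IsLUB {ρ : ℝ | ∃ u, nn u ≤ 1 ∧ ρ = ∑ j, v j * u j} d) (hle : d ≤ lam)
    (z : Fin n → ℝ) : ∑ j, v j * z j ≤ lam * nn z := by
  rcases (hnonneg z).eq_or_lt with h0 | hpos
  · obtain rfl := (hdef z).mp h0.symm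
    simp [← h0]
  · have hmem := hd.1 ⟨(nn z)⁻¹ • z, by
      rw [hsmul, abs_of_pos (inv_pos.mpr hpos), inv_mul_cancel₀ hpos.ne'], rfl⟩
    have hsum : ∑ j, v j * ((nn z)⁻¹ • z) j = (nn z)⁻¹ * ∑ j, v j * z j := by
      rw [Finset.mul_sum]
      refine Finset.sum_congr rfl fun j _ => ?_
      simp only [Pi.smul_apply, smul_eq_mul]
      ring
    rw [hsum] at hmem
    have := (inv_mul_le_iff₀ hpos).mp (hmem.trans hle)
    linarith

/-- Strong duality for maximizing a linear function minus a norm penalty over the unit box. -/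
lemma box_norm_penalty_le_iff {n : ℕ} {nn : (Fin n → ℝ) → ℝ}
    (hnonneg : ∀ x, 0 ≤ nn x) (hdef : ∀ x, nn x = 0 ↔ x = 0)
    (hadd : ∀ x y, nn (x + y) ≤ nn x + nn y)
    (hsmul : ∀ (c : ℝ) x, nn (c • x) = |c| * nn x)
    {dn : (Fin n → ℝ) → ℝ}
    (hdn : ∀ v, IsLUB {ρ : ℝ | ∃ u, nn u ≤ 1 ∧ ρ = ∑ j, v j * u j} (dn v))
    {c : Fin n → ℝ} (hc : ∀ j, 0 ≤ c j ∧ c j ≤ 1) {lam : ℝ} (hlam : 0 ≤ lam)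
    (v : Fin n → ℝ) (β : ℝ) :
    (∀ x : Fin n → ℝ, (∀ j, 0 ≤ x j ∧ x j ≤ 1) → ∑ j, v j * x j - lam * nn (x - c) ≤ β) ↔
    ∃ π τ : Fin n → ℝ, (∀ j, 0 ≤ π j) ∧ (∀ j, 0 ≤ τ j) ∧
      ∑ j, (v j - π j + τ j) * c j + ∑ j, π j ≤ β ∧ dn (fun j => π j - τ j - v j) ≤ lam := by
  have hneg (z : Fin n → ℝ) : nn (-z) = nn z := by simpa using hsmul (-1) z
  constructor
  · intro h
    have hK : Convex ℝ {x : Fin n → ℝ | ∀ j, 0 ≤ x j ∧ x j ≤ 1} := by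
      have : {x : Fin n → ℝ | ∀ j, 0 ≤ x j ∧ x j ≤ 1} = Set.Icc 0 1 := by
        ext x
        simp [Pi.le_def, forall_and]
      exact this ▸ convex_Icc 0 1
    obtain ⟨g, hg, hgK⟩ := exists_linear_between hadd hsmul hlam hK hc
      (dotProductBilin ℝ ℝ v) (β := β) h
    let a : Fin n → ℝ := fun j => g (Pi.single j 1)
    have ha (x : Fin n → ℝ) : g x = ∑ j, a j * x j := by
      rw [LinearMap.pi_apply_eq_sum_univ g x]
      refine Finset.sum_congr rfl fun j _ => ?_
      rw [smul_eq_mul, mul_comm]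
      congr 2
      ext k
      simp [Pi.single_apply, eq_comm]
    have hpm (j : Fin n) : max (v j - a j) 0 - max (-(v j - a j)) 0 = v j - a j :=
      max_zero_sub_max_neg_zero_eq_self _
    refine ⟨fun j => max (v j - a j) 0, fun j => max (-(v j - a j)) 0,
      fun j => le_max_right _ _, fun j => le_max_right _ _, ?_, ?_⟩
    · let x : Fin n → ℝ := fun j => if 0 ≤ v j - a j then 1 else 0
      have hx := hgK x fun j => by
        simp only [x]
        split_ifs <;> simp
      have hvx : dotProductBilin ℝ ℝ v x = ∑ j, v j * x j := rfl
      have hmax : ∑ j, max (v j - a j) 0 = ∑ j, v j * x j - ∑ j, a j * x j := by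
        rw [← Finset.sum_sub_distrib]
        refine Finset.sum_congr rfl fun j _ => ?_
        simp only [x]
        split_ifs with hj
        · rw [max_eq_left hj]
          ring
        · rw [max_eq_right (not_le.mp hj).le]
          ring
      have hac : ∑ j, (v j - max (v j - a j) 0 + max (-(v j - a j)) 0) * c j
          = ∑ j, a j * c j :=
        Finset.sum_congr rfl fun j _ => by
          congr 1
          linarith [hpm j]
      rw [map_sub, ha, ha, hvx] at hx
      rw [hac, hmax]
      linarith
    · refine (hdn _).2 ?_
      rintro ρ ⟨u, hu, rfl⟩
      have hsum : ∑ j, (max (v j - a j) 0 - max (-(v j - a j)) 0 - v j) * u j = g (-u) := by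
        rw [ha]
        refine Finset.sum_congr rfl fun j _ => ?_
        rw [hpm, Pi.neg_apply]
        ring
      rw [hsum]
      calc g (-u) ≤ lam * nn (-u) := hg _
        _ ≤ lam * 1 := by
          rw [hneg]
          exact mul_le_mul_of_nonneg_left hu hlam
        _ = lam := mul_one _
  · rintro ⟨π, τ, hπ, hτ, hβ, hd⟩ x hx
    have hCS := sum_mul_le_of_dual_le hnonneg hdef hsmul (hdn _) hd (-(x - c))
    rw [hneg] at hCS
    have hterm : ∑ j, v j * x j ≤ ∑ j, ((v j - π j + τ j) * c j + π j
        + (π j - τ j - v j) * (-(x - c)) j) := by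
      refine Finset.sum_le_sum fun j _ => ?_
      simp only [Pi.neg_apply, Pi.sub_apply]
      nlinarith [mul_nonneg (hπ j) (sub_nonneg.mpr (hx j).2), mul_nonneg (hτ j) (hx j).1]
    rw [Finset.sum_add_distrib, Finset.sum_add_distrib] at hterm
    linarith


/-- Proposition (SVM - Special Case 2) of the paper: characterization of `(λ, α, w) ∈ Ω_s`
for distributionally robust SVM with hinge loss, feature support set `X = [0, 1]^n`, and
classification transport cost `d_C((x,y),(x',y')) = ‖x − x'‖ + κ·𝟙{y ≠ y'}` on
`ℝ^n × {−1, +1}`. Here `nn` is a norm on `ℝ^n` and `dn` is its dual norm. -/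
theorem drfl_svm_box_case2_omega
    (n N : ℕ) (κ : ℝ) (hκ : 0 < κ)
    (nn : (Fin n → ℝ) → ℝ)
    (hnn_nonneg : ∀ x, 0 ≤ nn x)
    (hnn_def : ∀ x, nn x = 0 ↔ x = 0)
    (hnn_add : ∀ x y, nn (x + y) ≤ nn x + nn y)
    (hnn_smul : ∀ (c : ℝ) x, nn (c • x) = |c| * nn x)
    (dn : (Fin n → ℝ) → ℝ)
    (hdn : ∀ v, IsLUB {ρ : ℝ | ∃ u, nn u ≤ 1 ∧ ρ = ∑ j, v j * u j} (dn v))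
    (xhat : Fin N → Fin n → ℝ) (hdata : ∀ i j, 0 ≤ xhat i j ∧ xhat i j ≤ 1)
    (yhat : Fin N → ℝ) (hyhat : ∀ i, yhat i = 1 ∨ yhat i = -1)
    (lam : ℝ) (hlam : 0 ≤ lam) (α : Fin N → ℝ) (w : Fin n → ℝ) :
    (∀ i, ∀ x : Fin n → ℝ, (∀ j, 0 ≤ x j ∧ x j ≤ 1) →
        ∀ y : ℝ, (y = 1 ∨ y = -1) →
        max 0 (1 - y * ∑ j, w j * x j)
          - lam * (nn (x - xhat i) + κ * (if y = yhat i then 0 else 1)) ≤ α i)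
    ↔
    ((∀ i, 0 ≤ α i) ∧ ∀ i, ∃ πp πm τp τm : Fin n → ℝ,
      (∀ j, 0 ≤ πp j) ∧ (∀ j, 0 ≤ πm j) ∧ (∀ j, 0 ≤ τp j) ∧ (∀ j, 0 ≤ τm j) ∧
      1 + (∑ j, (-(yhat i) * w j - πp j + τp j) * xhat i j) + (∑ j, πp j) ≤ α i ∧
      1 + (∑ j, (yhat i * w j - πm j + τm j) * xhat i j) + (∑ j, πm j)
        - κ * lam ≤ α i ∧
      dn (fun j => πp j - τp j + yhat i * w j) ≤ lam ∧
      dn (fun j => πm j - τm j - yhat i * w j) ≤ lam) := by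
  have hdual (i : Fin N) (v : Fin n → ℝ) (β : ℝ) :=
    box_norm_penalty_le_iff hnn_nonneg hnn_def hnn_add hnn_smul hdn (hdata i) hlam v β
  have hscale (a : ℝ) (x : Fin n → ℝ) : ∑ j, a * w j * x j = a * ∑ j, w j * x j := by
    simp only [Finset.mul_sum, mul_assoc]
  have hflip (i : Fin N) : -yhat i ≠ yhat i := by
    rcases hyhat i with h | h <;> rw [h] <;> norm_num
  have hzero : nn 0 = 0 := (hnn_def 0).mpr rfl
  constructor
  · intro h
    refine ⟨fun i => ?_, fun i => ?_⟩
    · have hi := h i (xhat i) (hdata i) (yhat i) (hyhat i)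
      rw [sub_self, hzero, if_pos rfl] at hi
      linarith [le_max_left 0 (1 - yhat i * ∑ j, w j * xhat i j)]
    · obtain ⟨πp, τp, hπp, hτp, hp, hdp⟩ :=
        (hdual i (fun j => -(yhat i) * w j) (α i - 1)).mp fun x hx => by
          have hi := h i x hx (yhat i) (hyhat i)
          rw [if_pos rfl] at hi
          rw [hscale]
          linarith [le_max_right 0 (1 - yhat i * ∑ j, w j * x j)]
      obtain ⟨πm, τm, hπm, hτm, hm, hdm⟩ :=
        (hdual i (fun j => yhat i * w j) (α i - 1 + κ * lam)).mp fun x hx => by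
          have hi := h i x hx (-yhat i) (by
            rcases hyhat i with h' | h' <;> simp [h'])
          rw [if_neg (hflip i)] at hi
          rw [hscale]
          linarith [le_max_right 0 (1 - -yhat i * ∑ j, w j * x j)]
      refine ⟨πp, πm, τp, τm, hπp, hπm, hτp, hτm, by linarith, by linarith, ?_, hdm⟩
      simpa only [neg_mul, sub_neg_eq_add] using hdp
  · rintro ⟨hα, h⟩ i x hx y hy
    obtain ⟨πp, πm, τp, τm, hπp, hπm, hτp, hτm, hp, hm, hdp, hdm⟩ := h i
    rw [sub_le_iff_le_add]
    refine max_le ?_ ?_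
    · have : 0 ≤ nn (x - xhat i) + κ * (if y = yhat i then 0 else 1) :=
        add_nonneg (hnn_nonneg _) (mul_nonneg hκ.le (by split_ifs <;> norm_num))
      exact add_nonneg (hα i) (mul_nonneg hlam this)
    · by_cases hyi : y = yhat i
      · have hi := (hdual i (fun j => -(yhat i) * w j) (α i - 1)).mpr
          ⟨πp, τp, hπp, hτp, by linarith, by
            simpa only [neg_mul, sub_neg_eq_add] using hdp⟩ x hx
        rw [hscale] at hi
        rw [if_pos hyi, hyi]
        linarith
      · have hyneg : y = -yhat i := by
          rcases hy with rfl | rfl <;> rcases hyhat i with h' | h' <;> simp_all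
        have hi := (hdual i (fun j => yhat i * w j) (α i - 1 + κ * lam)).mpr
          ⟨πm, τm, hπm, hτm, by linarith, hdm⟩ x hx
        rw [hscale] at hi
        rw [if_neg hyi, hyneg]
        linarith
end
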